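/- arXiv:1601.03489 — 10 statements merged into one kernel-verified Lean document; each statement's English description precedes it below -/
import Mathlib

section
/- Let Q be an irreducible conservative q-matrix on F with the given block structure, and let n ≥ 1. Then every closed communicating class of the LC-block-augmented truncation ₙQ is contained in F_n and has nonempty intersection with the level L_n; consequently ₙQ has at least one closed communicating class, and the number of closed communicating classes of ₙQ is at most S₁ + 1. -/
/-!
Write `ₙQ` for the truncation. A path of positive rates of `Q` from `x` to level `n` can be followed
in `ₙQ`: a step into `F_n`, or a step within a level, keeps a positive rate, and any other step goes
to some `(m, j)` with `m > n`, so that `ₙQ` moves to `(n, j)` instead (`qstep_cases`). Hence, `Q`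
being irreducible, every state reaches level `n` under `ₙQ` (`reaches_level`). Moreover `ₙQ` has no
positive rate from `F_n` to its complement (`Reaches.level_le`).

A closed class contains everything reachable from it, so it meets level `n`, and being reachable from
that level it lies in `F_n`. Distinct classes are disjoint, so the phase of a state of level `n` in
each closed class gives an injection into `{0, …, S₁}`. For existence, a state of level `n` whose
(finite) set of reachable states has least cardinality lies in a closed class: any state `y` it
reaches leads back to level `n`, and minimality forces the reachable set to be unchanged.
-/

/-- The block-structured state space `F = ⋃_{k≥0} L_k`, where
`L_0 = {0} × {0,…,S₀}` and `L_k = {k} × {0,…,S₁}` for `k ≥ 1`. -/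
abbrev BState (S0 S1 : ℕ) : Type := {p : ℕ × ℕ // p.2 ≤ if p.1 = 0 then S0 else S1}

/-- A (stable) q-matrix: nonnegative off-diagonal entries, and for each row the
off-diagonal entries are summable with sum at most `-q x x` (finite diagonal). -/
def IsQMatrix {α : Type*} (q : α → α → ℝ) : Prop :=
  (∀ x y : α, x ≠ y → 0 ≤ q x y) ∧
    ∀ x : α, Summable (fun y : {z : α // z ≠ x} => q x (y : α)) ∧
      (∑' y : {z : α // z ≠ x}, q x (y : α)) ≤ - q x x

/-- A q-matrix is conservative if each of its rows sums to zero. -/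
def IsConservative {α : Type*} (q : α → α → ℝ) : Prop :=
  ∀ x : α, (∑' y : {z : α // z ≠ x}, q x (y : α)) = - q x x

/-- Reachability: `y` is reachable from `x` through a chain of positive rates. -/
def Reaches {α : Type*} (q : α → α → ℝ) : α → α → Prop :=
  Relation.ReflTransGen (fun a b => 0 < q a b)

/-- Two states communicate if each is reachable from the other. -/
def Communicates {α : Type*} (q : α → α → ℝ) (x y : α) : Prop :=
  Reaches q x y ∧ Reaches q y x

/-- A communicating class: an equivalence class of the communication relation. -/
def IsCommClass {α : Type*} (q : α → α → ℝ) (C : Set α) : Prop :=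
  ∃ x : α, C = {y | Communicates q x y}

/-- A closed communicating class: no positive rate leads out of it. -/
def IsClosedCommClass {α : Type*} (q : α → α → ℝ) (C : Set α) : Prop :=
  IsCommClass q C ∧ ∀ x ∈ C, ∀ y ∉ C, q x y = 0

/-- Irreducibility: every state is reachable from every state. -/
def IsIrreducibleQ {α : Type*} (q : α → α → ℝ) : Prop :=
  ∀ x y : α, Reaches q x y

/-- The last-column-block-augmented northwest-corner truncation `ₙQ` of `Q`. -/
noncomputable def LCtrunc (S0 S1 n : ℕ) (q : BState S0 S1 → BState S0 S1 → ℝ)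
    (x y : BState S0 S1) : ℝ :=
  if y.1.1 < n then q x y
  else if y.1.1 = n then
    q x y + ∑' m : ℕ,
      if h : (n < m ∧ m ≠ x.1.1) ∧ y.1.2 ≤ (if m = 0 then S0 else S1)
        then q x ⟨(m, y.1.2), h.2⟩ else 0
  else if y.1.1 = x.1.1 then q x y else 0

section Helpers

variable {S0 S1 n : ℕ} {q : BState S0 S1 → BState S0 S1 → ℝ}

lemma IsQMatrix.ne_of_pos {α : Type*} {q : α → α → ℝ} (hq : IsQMatrix q) {x y : α}
    (h : 0 < q x y) : x ≠ y := by
  rintro rfl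
  have h1 : 0 ≤ ∑' y : {z : α // z ≠ x}, q x (y : α) :=
    tsum_nonneg fun y => hq.1 _ _ y.2.symm
  linarith [(hq.2 x).2]

/-- The summand of the augmentation term of `LCtrunc`: the rate from `x` to `(m, j)` when `m > n`
is not the level of `x`, and `0` otherwise. -/
noncomputable def augTerm (n : ℕ) (q : BState S0 S1 → BState S0 S1 → ℝ) (x : BState S0 S1)
    (j m : ℕ) : ℝ :=
  if h : (n < m ∧ m ≠ x.1.1) ∧ j ≤ (if m = 0 then S0 else S1)
    then q x ⟨(m, j), h.2⟩ else 0

lemma augTerm_nonneg (hq : IsQMatrix q) (x : BState S0 S1) (j m : ℕ) :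
    0 ≤ augTerm n q x j m := by
  unfold augTerm
  by_cases h : (n < m ∧ m ≠ x.1.1) ∧ j ≤ (if m = 0 then S0 else S1)
  · rw [dif_pos h]
    exact hq.1 _ _ fun e => h.1.2 (congrArg (fun w : BState S0 S1 => w.1.1) e).symm
  · rw [dif_neg h]

lemma summable_augTerm (hq : IsQMatrix q) (x : BState S0 S1) (j : ℕ) :
    Summable (augTerm n q x j) := by
  -- On its support, the family is a reindexed subfamily of the off-diagonal part of row `x`.
  let s : Set ℕ := {m | (n < m ∧ m ≠ x.1.1) ∧ j ≤ (if m = 0 then S0 else S1)}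
  have hs : Function.support (augTerm n q x j) ⊆ s := by
    intro m hm
    by_contra h
    exact hm (dif_neg h)
  rw [← Set.indicator_eq_self.2 hs, ← summable_subtype_iff_indicator]
  let g : s → {z : BState S0 S1 // z ≠ x} := fun m =>
    ⟨⟨(m.1, j), m.2.2⟩, fun e => m.2.1.2 (congrArg (fun w : BState S0 S1 => w.1.1) e)⟩
  have hg : Function.Injective g := by
    intro a b hab
    have : (g a).1.1.1 = (g b).1.1.1 := by rw [hab]
    exact Subtype.ext this
  refine ((hq.2 x).1.comp_injective hg).congr fun m => ?_
  have hm : (n < m.1 ∧ m.1 ≠ x.1.1) ∧ j ≤ (if m.1 = 0 then S0 else S1) := m.2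
  simp only [Function.comp_apply, augTerm]
  rw [dif_pos hm]

lemma LCtrunc_of_level_eq (x : BState S0 S1) {y : BState S0 S1} (hy : y.1.1 = n) :
    LCtrunc S0 S1 n q x y = q x y + ∑' m, augTerm n q x y.1.2 m := by
  unfold LCtrunc augTerm
  rw [if_neg (by omega), if_pos hy]

lemma LCtrunc_nonneg (hq : IsQMatrix q) {x y : BState S0 S1} (hxy : x ≠ y) :
    0 ≤ LCtrunc S0 S1 n q x y := by
  by_cases hy : y.1.1 = n
  · rw [LCtrunc_of_level_eq x hy]
    exact add_nonneg (hq.1 _ _ hxy) (tsum_nonneg fun m => augTerm_nonneg hq x _ m)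
  · unfold LCtrunc
    rw [if_neg hy]
    split_ifs
    · exact hq.1 _ _ hxy
    · exact hq.1 _ _ hxy
    · exact le_rfl

/-- A positive rate `q x y` either survives in the truncation, or is redirected to a positive rate
into level `n`, or starts from level `n`. -/
lemma qstep_cases (hq : IsQMatrix q) (hn : 1 ≤ n) {x y : BState S0 S1} (h : 0 < q x y) :
    0 < LCtrunc S0 S1 n q x y ∨ (∃ z : BState S0 S1, z.1.1 = n ∧ 0 < LCtrunc S0 S1 n q x z) ∨
      x.1.1 = n := by
  rcases lt_trichotomy y.1.1 n with hy | hy | hy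
  · left
    unfold LCtrunc
    rwa [if_pos hy]
  · left
    rw [LCtrunc_of_level_eq x hy]
    exact add_pos_of_pos_of_nonneg h (tsum_nonneg fun m => augTerm_nonneg hq x _ m)
  by_cases hxy : y.1.1 = x.1.1
  · left
    unfold LCtrunc
    rwa [if_neg (by omega), if_neg (by omega), if_pos hxy]
  right
  by_cases hx : x.1.1 = n
  · exact Or.inr hx
  left
  have hy2 := y.2
  rw [if_neg (by omega)] at hy2
  let z : BState S0 S1 := ⟨(n, y.1.2), by simpa [show n ≠ 0 by omega] using hy2⟩
  refine ⟨z, rfl, ?_⟩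
  rw [LCtrunc_of_level_eq x (rfl : z.1.1 = n)]
  have hterm : augTerm n q x z.1.2 y.1.1 = q x y := dif_pos ⟨⟨hy, hxy⟩, y.2⟩
  have h1 := (summable_augTerm (n := n) hq x z.1.2).le_tsum y.1.1
    fun m _ => augTerm_nonneg hq x _ m
  have h2 : 0 ≤ q x z := hq.1 _ _ fun e => hx (by rw [e])
  linarith

lemma reaches_level (hq : IsQMatrix q) (hirr : IsIrreducibleQ q) (hn : 1 ≤ n)
    (x : BState S0 S1) :
    ∃ z : BState S0 S1, z.1.1 = n ∧ Reaches (LCtrunc S0 S1 n q) x z := by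
  have h : Reaches q x ⟨(n, 0), Nat.zero_le _⟩ := hirr _ _
  induction h using Relation.ReflTransGen.head_induction_on with
  | refl => exact ⟨_, rfl, .refl⟩
  | head hab _ ih =>
    rcases qstep_cases hq hn hab with h | ⟨z, hz, h⟩ | h
    · obtain ⟨z, hz, hr⟩ := ih
      exact ⟨z, hz, .head h hr⟩
    · exact ⟨z, hz, .single h⟩
    · exact ⟨_, h, .refl⟩

lemma Reaches.level_le {x y : BState S0 S1} (h : Reaches (LCtrunc S0 S1 n q) x y)
    (hx : x.1.1 ≤ n) : y.1.1 ≤ n := by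
  induction h with
  | refl => exact hx
  | @tail b c _ hbc ih =>
    by_contra hc
    unfold LCtrunc at hbc
    rw [if_neg (by omega), if_neg (by omega), if_neg (by omega)] at hbc
    exact lt_irrefl _ hbc

lemma finite_level_le (S0 S1 n : ℕ) : {x : BState S0 S1 | x.1.1 ≤ n}.Finite := by
  refine Set.Finite.of_finite_image (f := Subtype.val) ?_ Subtype.val_injective.injOn
  refine ((Set.finite_Iic n).prod (Set.finite_Iic (max S0 S1))).subset ?_
  rintro _ ⟨x, hx, rfl⟩
  refine ⟨hx, ?_⟩
  have := x.2
  simp only [Set.mem_Iic]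
  split_ifs at this <;> omega

lemma IsClosedCommClass.mem_of_reaches {α : Type*} {q : α → α → ℝ} {C : Set α}
    (hC : IsClosedCommClass q C) {x y : α} (hx : x ∈ C) (h : Reaches q x y) : y ∈ C := by
  induction h with
  | refl => exact hx
  | tail _ hbc ih =>
    by_contra hc
    exact hbc.ne' (hC.2 _ ih _ hc)

lemma IsCommClass.eq_of_mem {α : Type*} {q : α → α → ℝ} {C : Set α}
    (hC : IsCommClass q C) {x : α} (hx : x ∈ C) : C = {y | Communicates q x y} := by
  obtain ⟨a, rfl⟩ := hC
  ext y
  exact ⟨fun h => ⟨hx.2.trans h.1, h.2.trans hx.1⟩, fun h => ⟨hx.1.trans h.1, h.2.trans hx.2⟩⟩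

lemma closedCommClass_sub (hq : IsQMatrix q) (hirr : IsIrreducibleQ q) (hn : 1 ≤ n)
    {C : Set (BState S0 S1)} (hC : IsClosedCommClass (LCtrunc S0 S1 n q) C) :
    (∀ x ∈ C, x.1.1 ≤ n) ∧ ∃ x ∈ C, x.1.1 = n := by
  obtain ⟨a, ha⟩ := hC.1
  have haC : a ∈ C := by rw [ha]; exact ⟨.refl, .refl⟩
  obtain ⟨z, hz, haz⟩ := reaches_level hq hirr hn a
  have hzC := hC.mem_of_reaches haC haz
  refine ⟨fun x hx => ?_, z, hzC, hz⟩
  rw [hC.1.eq_of_mem hzC] at hx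
  exact hx.1.level_le hz.le

lemma exists_closedCommClass (hq : IsQMatrix q) (hirr : IsIrreducibleQ q) (hn : 1 ≤ n) :
    ∃ C : Set (BState S0 S1), IsClosedCommClass (LCtrunc S0 S1 n q) C := by
  let R : BState S0 S1 → Set (BState S0 S1) := fun x => {y | Reaches (LCtrunc S0 S1 n q) x y}
  obtain ⟨x, hx, hmin⟩ := (measure fun x => (R x).ncard).wf.has_min
    {x : BState S0 S1 | x.1.1 = n} ⟨⟨(n, 0), Nat.zero_le _⟩, rfl⟩
  have hfin : (R x).Finite :=
    (finite_level_le S0 S1 n).subset fun y hy => Reaches.level_le hy (le_of_eq hx)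
  have hback : ∀ y, Reaches (LCtrunc S0 S1 n q) x y → Reaches (LCtrunc S0 S1 n q) y x := by
    intro y hxy
    obtain ⟨z, hz, hyz⟩ := reaches_level hq hirr hn y
    have hsub : R z ⊆ R x := fun w hw => (hxy.trans hyz).trans hw
    have heq : R z = R x :=
      Set.eq_of_subset_of_ncard_le hsub (not_lt.1 (hmin z hz)) hfin
    have hzx : x ∈ R z := by rw [heq]; exact .refl
    exact hyz.trans hzx
  refine ⟨_, ⟨x, rfl⟩, fun a ha b hb => ?_⟩
  have hab : a ≠ b := fun e => hb (e ▸ ha)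
  refine le_antisymm (not_lt.1 fun h => hb ?_) (LCtrunc_nonneg hq hab)
  have hxb := Relation.ReflTransGen.tail ha.1 h
  exact ⟨hxb, hback b hxb⟩

end Helpers

/-- Every closed communicating class of the LC-block-augmented truncation of an
irreducible conservative q-matrix is contained in `F_n` and intersects level `L_n`;
consequently there is at least one closed communicating class and at most `S₁ + 1`
of them. -/
theorem stmt0 (S0 S1 : ℕ) (q : BState S0 S1 → BState S0 S1 → ℝ)
    (hq : IsQMatrix q) (hcons : IsConservative q) (hirr : IsIrreducibleQ q)
    (n : ℕ) (hn : 1 ≤ n) :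
    (∀ C : Set (BState S0 S1), IsClosedCommClass (LCtrunc S0 S1 n q) C →
      (∀ x ∈ C, x.1.1 ≤ n) ∧ ∃ x ∈ C, x.1.1 = n) ∧
    (∃ C : Set (BState S0 S1), IsClosedCommClass (LCtrunc S0 S1 n q) C) ∧
    {C : Set (BState S0 S1) | IsClosedCommClass (LCtrunc S0 S1 n q) C}.Finite ∧
    {C : Set (BState S0 S1) | IsClosedCommClass (LCtrunc S0 S1 n q) C}.ncard ≤ S1 + 1 := by
  have key := fun C (hC : IsClosedCommClass (LCtrunc S0 S1 n q) C) =>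
    closedCommClass_sub hq hirr hn hC
  refine ⟨key, exists_closedCommClass hq hirr hn, ?_⟩
  have : Nonempty (BState S0 S1) := ⟨⟨(0, 0), Nat.zero_le _⟩⟩
  -- `f C` is a state of level `n` in the closed class `C`.
  choose! f hfC hfn using fun C hC => (key C hC).2
  have hmaps : ∀ C ∈ {C | IsClosedCommClass (LCtrunc S0 S1 n q) C},
      (f C).1.2 ∈ (Finset.range (S1 + 1) : Set ℕ) := by
    intro C hC
    have h := (f C).2
    rw [if_neg (by have := hfn C hC; omega)] at h
    simp only [Finset.coe_range, Set.mem_Iio]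
    omega
  have hinj : Set.InjOn (fun C => (f C).1.2) {C | IsClosedCommClass (LCtrunc S0 S1 n q) C} := by
    intro C hC D hD h
    have hfe : f C = f D := Subtype.ext (Prod.ext ((hfn C hC).trans (hfn D hD).symm) h)
    rw [hC.1.eq_of_mem (hfC C hC), hD.1.eq_of_mem (hfC D hD), hfe]
  refine ⟨Set.Finite.of_injOn hmaps hinj (Finset.finite_toSet _), ?_⟩
  have := Set.ncard_le_ncard_of_injOn _ hmaps hinj (Finset.finite_toSet _)
  rwa [Set.ncard_coe_finset, Finset.card_range] at this
end

section
/- Let F be a countable set, D = (d(x;y))_{x,y∈F} a real matrix, π : F → [0,∞) with Σ_{x∈F} π(x) = 1, f : F → [1,∞) with Σ_{x} π(x) f(x) < ∞, v : F → [0,∞), and C ≥ 0. Suppose that for every x ∈ F one has Σ_{y} |d(x;y)| f(y) < ∞, and that for every ğ : F → ℝ with |ğ(y)| ≤ f(y) for all y and every x ∈ F, |Σ_{y} d(x;y) ğ(y)| ≤ (|Σ_{y} π(y) ğ(y)| + 1)(v(x) + C). Then for every g : F → ℝ with 0 ≤ g(y) ≤ f(y) for all y and every x ∈ F, Σ_{y}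 |d(x;y)| g(y) ≤ (Σ_{y} π(y) g(y) + 1)(v(x) + C). -/
/-! For a fixed row `x`, apply the hypothesis to `y ↦ sgn (d x y) * g y`, which is bounded by `f`
in absolute value. Its row sum is exactly the absolute row sum of `g`, while the absolute value of
its `pi`-average is at most the `pi`-average of `g` because `g` is nonnegative. -/

/-- Abstract form of the paper's Lemma 2.3: the row-sum bound for the deviation
matrix `D` against functions `ğ` with `|ğ| ≤ f` transfers to the absolute row
sums against functions `g` with `0 ≤ g ≤ f`. -/
theorem stmt2 {F : Type*} [Countable F]
    (d : F → F → ℝ) (pi f v : F → ℝ) (C : ℝ)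
    (hpi0 : ∀ x, 0 ≤ pi x) (hpi1 : (∑' x, pi x) = 1)
    (hf : ∀ x, 1 ≤ f x) (hpif : Summable (fun x => pi x * f x))
    (hv : ∀ x, 0 ≤ v x) (hC : 0 ≤ C)
    (hdf : ∀ x, Summable (fun y => |d x y| * f y))
    (hrow : ∀ g : F → ℝ, (∀ y, |g y| ≤ f y) → ∀ x,
      |∑' y, d x y * g y| ≤ (|∑' y, pi y * g y| + 1) * (v x + C)) :
    ∀ g : F → ℝ, (∀ y, 0 ≤ g y ∧ g y ≤ f y) → ∀ x,
      (∑' y, |d x y| * g y) ≤ ((∑' y, pi y * g y) + 1) * (v x + C) := by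
  intro g hg x
  set s : F → ℝ := fun y => (SignType.sign (d x y) : ℝ) with hs
  have hs1 : ∀ y, |s y| ≤ 1 := by
    intro y
    rcases lt_trichotomy (d x y) 0 with h | h | h <;> simp [hs, h]
  have hsg : ∀ y, |s y * g y| ≤ g y := by
    intro y
    rw [abs_mul, abs_of_nonneg (hg y).1]
    exact mul_le_of_le_one_left (hg y).1 (hs1 y)
  have hrow_eq : ∀ y, d x y * (s y * g y) = |d x y| * g y := by
    intro y
    rw [← mul_assoc, self_mul_sign]
  have hpig : Summable (fun y => pi y * g y) :=
    Summable.of_nonneg_of_le (fun y => mul_nonneg (hpi0 y) (hg y).1)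
      (fun y => mul_le_mul_of_nonneg_left (hg y).2 (hpi0 y)) hpif
  have hmean : |∑' y, pi y * (s y * g y)| ≤ ∑' y, pi y * g y := by
    rw [← Real.norm_eq_abs]
    refine tsum_of_norm_bounded hpig.hasSum fun y => ?_
    rw [Real.norm_eq_abs, abs_mul, abs_of_nonneg (hpi0 y)]
    exact mul_le_mul_of_nonneg_left (hsg y) (hpi0 y)
  have hmain := hrow (fun y => s y * g y) (fun y => (hsg y).trans (hg y).2) x
  simp only [hrow_eq] at hmain
  have hvC : 0 ≤ v x + C := add_nonneg (hv x) hC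
  calc (∑' y, |d x y| * g y) ≤ |∑' y, |d x y| * g y| := le_abs_self _
    _ ≤ (|∑' y, pi y * (s y * g y)| + 1) * (v x + C) := hmain
    _ ≤ ((∑' y, pi y * g y) + 1) * (v x + C) := by gcongr
end

section
/- Let Q be a q-matrix on F with the given block structure, n ≥ 1, and ₙQ its LC-block-augmented truncation. Let π, ₙπ : F → [0,∞) be probability vectors with ₙπ(k,i) = 0 whenever k > n. Let f : F → [1,∞) with Σ_{x} π(x) f(x) < ∞, v : F → [0,∞), and C ≥ 0. Assume hypotheses (a), (b), (c): (a) for every x ∈ F, Σ_{y} |d(x;y)| f(y) < ∞, and for every g : F → ℝ with 0 ≤ g ≤ f pointwise and every x ∈ F, Σ_{y} |d(x;y)| g(y) ≤ (Σ_{z} π(z) g(z) + 1)(v(x) + C); (b) for every (k,i) ∈ F_n, Σ_{(m,j)∈F̄_n} q(k,i;m,j) v(m,j) < ∞; (c) for every y ∈ F, ₙπ(y) − π(y) = Σ_{x∈F} Σ_{z∈F} ₙπ(x)(ₙq(x;z) − q(x;z)) d(z;y), all series converging absolutely. Then for every g : F → ℝ with 1 ≤ g(x) ≤ f(x) for all x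 ∈ F, Σ_{y} |π(y) − ₙπ(y)| g(y) ≤ E(n) · Σ_{z} π(z) g(z), where E(n) := 2 Σ_{(k,i)∈F_n} ₙπ(k,i) Σ_{(m,j)∈F̄_n} q(k,i;m,j) (v(m,j) + v(n,j) + 2C). -/
/-- The value of `v` at state `(k, j)`, when `(k, j) ∈ F` (otherwise `0`). -/
noncomputable def vAt (S0 S1 : ℕ) (v : BState S0 S1 → ℝ) (k j : ℕ) : ℝ :=
  if h : j ≤ (if k = 0 then S0 else S1) then v ⟨(k, j), h⟩ else 0

/-- The error decay function
`E(n) = 2 Σ_{(k,i)∈F_n} ₙπ(k,i) Σ_{(m,j)∈F̄_n} q(k,i;m,j) (v(m,j) + v(n,j) + 2C)`. -/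
noncomputable def Efun (S0 S1 n : ℕ) (q : BState S0 S1 → BState S0 S1 → ℝ)
    (npi v : BState S0 S1 → ℝ) (C : ℝ) : ℝ :=
  2 * ∑' x : BState S0 S1,
    (if x.1.1 ≤ n then
      npi x * ∑' y : BState S0 S1,
        (if n < y.1.1 then q x y * (v y + vAt S0 S1 v n y.1.2 + 2 * C) else 0)
     else 0)

open scoped ENNReal

namespace LCBlock

/-- A bound in `ℝ≥0∞` on a series of nonnegative reals bounds the real series. -/
lemma tsum_le_of_ofReal {α : Type*} {u : α → ℝ} (hu : ∀ a, 0 ≤ u a) {R : ℝ} (hR : 0 ≤ R)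
    (h : ∑' a, ENNReal.ofReal (u a) ≤ ENNReal.ofReal R) : ∑' a, u a ≤ R := by
  by_cases hs : Summable u
  · rw [← ENNReal.ofReal_tsum_of_nonneg hu hs] at h
    exact (ENNReal.ofReal_le_ofReal_iff hR).1 h
  · rwa [tsum_eq_zero_of_not_summable hs]

lemma ofReal_abs_tsum_le {α : Type*} (u : α → ℝ) :
    ENNReal.ofReal |∑' a, u a| ≤ ∑' a, ENNReal.ofReal |u a| := by
  by_cases hs : Summable fun a => |u a|
  · rw [← ENNReal.ofReal_tsum_of_nonneg (fun a => abs_nonneg _) hs]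
    apply ENNReal.ofReal_le_ofReal
    simpa [Real.norm_eq_abs] using norm_tsum_le_tsum_norm (f := u) (by simpa using hs)
  · rw [summable_abs_iff] at hs
    simp [tsum_eq_zero_of_not_summable hs]

variable {S0 S1 : ℕ}

/-- The state `(n, j)` receiving the transitions into `y = (m, j)`, `m > n ≥ 1`, in the truncation;
states of level `0`, whose phase need not exist at level `n`, are fixed. -/
def redir (n : ℕ) (hn : 1 ≤ n) (y : BState S0 S1) : BState S0 S1 :=
  if h : y.1.1 = 0 then y else ⟨(n, y.1.2), by
    have := y.2
    rw [if_neg h] at this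
    rwa [if_neg (by simp; omega)]⟩

/-- The rate `q(x; y)` if `y` lies above level `n`, and `0` otherwise. -/
noncomputable def tail (n : ℕ) (q : BState S0 S1 → BState S0 S1 → ℝ) (x y : BState S0 S1) : ℝ :=
  if n < y.1.1 then q x y else 0

variable {n : ℕ} {q : BState S0 S1 → BState S0 S1 → ℝ}

lemma tail_nonneg (hq : IsQMatrix q) {x : BState S0 S1} (hx : x.1.1 ≤ n) (y : BState S0 S1) :
    0 ≤ tail n q x y := by
  unfold tail
  split_ifs with h
  · exact hq.1 x y (by rintro rfl; omega)
  · exact le_rfl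

/-- Entrywise form of the redirection: column `z` of `ₙQ - Q` collects at most the rates redirected
to `z` and the rate removed at `z`. -/
lemma diff_le (hn : 1 ≤ n) (hq : IsQMatrix q) {x : BState S0 S1} (hx : x.1.1 ≤ n)
    (z : BState S0 S1) :
    ENNReal.ofReal |LCtrunc S0 S1 n q x z - q x z| ≤
      ∑' y, ENNReal.ofReal (tail n q x y) *
        ((if redir n hn y = z then 1 else 0) + (if y = z then 1 else 0)) := by
  rcases lt_trichotomy z.1.1 n with h | h | h
  · simp [LCtrunc, h]
  · have hz : z.1.2 ≤ S1 := by
      have := z.2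
      rwa [if_neg (by omega)] at this
    -- The column `{(m, z.2)}` as an injective family of states; the value at `m = 0` is a dummy.
    let e : ℕ → BState S0 S1 := fun m =>
      if hm : m = 0 then ⟨(0, 0), by simp⟩ else ⟨(m, z.1.2), by simpa [hm] using hz⟩
    have he1 : ∀ m, (e m).1.1 = m := by
      intro m
      by_cases hm : m = 0 <;> simp [e, hm]
    have he : Function.Injective e := fun a b hab => by rw [← he1 a, ← he1 b, hab]
    have hd : LCtrunc S0 S1 n q x z - q x z = ∑' m : ℕ, tail n q x (e m) := by
      simp only [LCtrunc, h, lt_irrefl, if_true, if_false, add_sub_cancel_left]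
      refine tsum_congr fun m => ?_
      by_cases hm : n < m
      · have hm0 : m ≠ 0 := by omega
        have hmx : m ≠ x.1.1 := by omega
        simp [tail, e, hm0, hm, hmx, hz]
      · simp [tail, he1, hm]
    rw [hd]
    refine (ofReal_abs_tsum_le _).trans (le_trans (ENNReal.tsum_le_tsum fun m => ?_)
      (ENNReal.tsum_comp_le_tsum_of_injective he _))
    rw [abs_of_nonneg (tail_nonneg hq hx _)]
    by_cases hm : n < m
    · have hm0 : m ≠ 0 := by omega
      have : redir n hn (e m) = z := by
        apply Subtype.ext
        simp [redir, e, hm0, ← h]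
      rw [if_pos this]
      exact le_mul_of_one_le_right' (by simp)
    · simp [tail, he1, hm]
  · have hd : |LCtrunc S0 S1 n q x z - q x z| = tail n q x z := by
      have h0 : 0 ≤ q x z := hq.1 x z (by rintro rfl; omega)
      have h1 : ¬ z.1.1 < n := by omega
      have h2 : z.1.1 ≠ n := by omega
      have h3 : z.1.1 ≠ x.1.1 := by omega
      simp [LCtrunc, tail, h, h1, h2, h3, abs_of_nonneg h0]
    rw [hd]
    refine le_trans ?_ (ENNReal.le_tsum z)
    exact le_mul_of_one_le_right' (by simp)

lemma tsum_diff_le (hn : 1 ≤ n) (hq : IsQMatrix q) {x : BState S0 S1} (hx : x.1.1 ≤ n)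
    (W : BState S0 S1 → ℝ≥0∞) :
    ∑' z, ENNReal.ofReal |LCtrunc S0 S1 n q x z - q x z| * W z ≤
      ∑' y, ENNReal.ofReal (tail n q x y) * (W (redir n hn y) + W y) := by
  calc ∑' z, ENNReal.ofReal |LCtrunc S0 S1 n q x z - q x z| * W z
      ≤ ∑' z, (∑' y, ENNReal.ofReal (tail n q x y) *
        ((if redir n hn y = z then 1 else 0) + (if y = z then 1 else 0))) * W z :=
        ENNReal.tsum_le_tsum fun z => mul_le_mul_left (diff_le hn hq hx z) _
    _ = ∑' y, ∑' z, ENNReal.ofReal (tail n q x y) *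
        (((if redir n hn y = z then 1 else 0) + (if y = z then 1 else 0)) * W z) := by
        rw [ENNReal.tsum_comm]
        simp_rw [← ENNReal.tsum_mul_right, mul_assoc]
    _ = _ := by
        refine tsum_congr fun y => ?_
        rw [ENNReal.tsum_mul_left]
        simp_rw [add_mul, ite_mul, one_mul, zero_mul]
        rw [ENNReal.tsum_add, tsum_ite_eq' , tsum_ite_eq']

lemma vAt_nonneg {v : BState S0 S1 → ℝ} (hv : ∀ x, 0 ≤ v x) (k j : ℕ) :
    0 ≤ vAt S0 S1 v k j := by
  unfold vAt
  split_ifs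
  all_goals first | exact hv _ | exact le_rfl

lemma vAt_redir (hn : 1 ≤ n) (v : BState S0 S1 → ℝ) {y : BState S0 S1} (hy : n < y.1.1) :
    vAt S0 S1 v n y.1.2 = v (redir n hn y) := by
  have h0 : y.1.1 ≠ 0 := by omega
  have hn0 : n ≠ 0 := by omega
  have h2 := y.2
  rw [if_neg h0] at h2
  simp [vAt, redir, h0, hn0, h2]

lemma summable_row (hq : IsQMatrix q) (x : BState S0 S1) : Summable (q x) := by
  have h := (hq.2 x).1
  rw [← (Set.finite_singleton x).summable_compl_iff]
  exact h

/-- The inner series of `E(n)` converges: `v(n, ·)` takes finitely many values. -/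
lemma summable_inner (hn : 1 ≤ n) (hq : IsQMatrix q) {x : BState S0 S1} (hx : x.1.1 ≤ n)
    {v : BState S0 S1 → ℝ} (hv : ∀ x, 0 ≤ v x) {C : ℝ}
    (hb : Summable (fun y : BState S0 S1 => if n < y.1.1 then q x y * v y else 0)) :
    Summable fun y : BState S0 S1 =>
      tail n q x y * (v y + vAt S0 S1 v n y.1.2 + 2 * C) := by
  have ht : Summable (tail n q x) := by
    have := (summable_row hq x).indicator {y : BState S0 S1 | n < y.1.1}
    refine this.congr fun y => ?_
    simp [tail, Set.indicator_apply]
  have h1 : Summable fun y => tail n q x y * v y := by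
    refine hb.congr fun y => ?_
    simp [tail, ite_mul]
  have h2 : Summable fun y : BState S0 S1 => tail n q x y * vAt S0 S1 v n y.1.2 := by
    refine Summable.of_nonneg_of_le
      (fun y => mul_nonneg (tail_nonneg hq hx y) (vAt_nonneg hv _ _)) (fun y => ?_)
      (ht.mul_right (∑ j ∈ Finset.range (S1 + 1), vAt S0 S1 v n j))
    by_cases hy : n < y.1.1
    · refine mul_le_mul_of_nonneg_left ?_ (tail_nonneg hq hx y)
      have h2 := y.2
      rw [if_neg (by omega)] at h2
      exact Finset.single_le_sum (f := fun j => vAt S0 S1 v n j)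
        (fun j _ => vAt_nonneg hv n j) (Finset.mem_range.2 (by omega))
    · simp [tail, hy]
  refine ((h1.add h2).add (ht.mul_right (2 * C))).congr fun y => ?_
  ring

/-- For `W = K (v + C)`, the redirected weight of row `x` is `K` times the inner sum of `E(n)`. -/
lemma ofReal_row (hn : 1 ≤ n) (hq : IsQMatrix q) {x : BState S0 S1} (hx : x.1.1 ≤ n)
    {v : BState S0 S1 → ℝ} (hv : ∀ x, 0 ≤ v x) {C K : ℝ} (hC : 0 ≤ C) (hK : 0 ≤ K)
    (hb : Summable (fun y : BState S0 S1 => if n < y.1.1 then q x y * v y else 0)) :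
    ∑' y, ENNReal.ofReal (tail n q x y) *
        (ENNReal.ofReal (K * (v (redir n hn y) + C)) + ENNReal.ofReal (K * (v y + C))) =
      ENNReal.ofReal (K * ∑' y : BState S0 S1,
        (if n < y.1.1 then q x y * (v y + vAt S0 S1 v n y.1.2 + 2 * C) else 0)) := by
  have hs := (summable_inner hn hq hx hv (C := C) hb).mul_left K
  rw [← tsum_mul_left]
  have hcongr : ∀ y : BState S0 S1,
      K * (if n < y.1.1 then q x y * (v y + vAt S0 S1 v n y.1.2 + 2 * C) else 0) =
        K * (tail n q x y * (v y + vAt S0 S1 v n y.1.2 + 2 * C)) := by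
    intro y
    simp [tail, ite_mul]
  rw [tsum_congr hcongr, ENNReal.ofReal_tsum_of_nonneg _ hs]
  · refine tsum_congr fun y => ?_
    by_cases hy : n < y.1.1
    · rw [vAt_redir hn v hy, ← ENNReal.ofReal_add, ← ENNReal.ofReal_mul (tail_nonneg hq hx y)]
      · congr 1
        ring
      · exact mul_nonneg hK (add_nonneg (hv _) hC)
      · exact mul_nonneg hK (add_nonneg (hv _) hC)
    · simp [tail, hy]
  · intro y
    have := tail_nonneg hq hx y
    have := hv y
    have := vAt_nonneg hv n y.1.2
    positivity

lemma finite_levels (n : ℕ) : {x : BState S0 S1 | x.1.1 ≤ n}.Finite := by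
  refine Set.Finite.of_injOn (f := Subtype.val)
    (t := ((Finset.range (n + 1) ×ˢ Finset.range (S0 + S1 + 1) : Finset (ℕ × ℕ)) : Set (ℕ × ℕ)))
    (fun x hx => ?_) Subtype.val_injective.injOn (Finset.finite_toSet _)
  have hx : x.1.1 ≤ n := hx
  have h2 := x.2
  have : x.1.2 ≤ S0 + S1 := by
    split_ifs at h2 <;> omega
  simp only [Finset.coe_product, Finset.coe_range, Set.mem_prod, Set.mem_Iio]
  omega

end LCBlock

open LCBlock in
/-- The relative-error bound (2.19) of the paper's Theorem 2.1, in per-function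
form over functions `g` with `e ≤ g ≤ f`. -/
theorem stmt4 (S0 S1 : ℕ) (n : ℕ) (hn : 1 ≤ n)
    (q d : BState S0 S1 → BState S0 S1 → ℝ) (hq : IsQMatrix q)
    (pi npi : BState S0 S1 → ℝ)
    (hpi0 : ∀ x, 0 ≤ pi x) (hpi1 : (∑' x, pi x) = 1)
    (hnpi0 : ∀ x, 0 ≤ npi x) (hnpi1 : (∑' x, npi x) = 1)
    (hvanish : ∀ x : BState S0 S1, n < x.1.1 → npi x = 0)
    (f : BState S0 S1 → ℝ) (hf : ∀ x, 1 ≤ f x)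
    (hpif : Summable (fun x => pi x * f x))
    (v : BState S0 S1 → ℝ) (hv : ∀ x, 0 ≤ v x)
    (C : ℝ) (hC : 0 ≤ C)
    (ha1 : ∀ x, Summable (fun y => |d x y| * f y))
    (ha2 : ∀ g : BState S0 S1 → ℝ, (∀ y, 0 ≤ g y ∧ g y ≤ f y) → ∀ x,
      (∑' y, |d x y| * g y) ≤ ((∑' z, pi z * g z) + 1) * (v x + C))
    (hb : ∀ x : BState S0 S1, x.1.1 ≤ n →
      Summable (fun y : BState S0 S1 => if n < y.1.1 then q x y * v y else 0))
    (hc : ∀ y : BState S0 S1,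
      Summable (fun p : BState S0 S1 × BState S0 S1 =>
        |npi p.1 * (LCtrunc S0 S1 n q p.1 p.2 - q p.1 p.2) * d p.2 y|) ∧
      npi y - pi y =
        ∑' x : BState S0 S1, ∑' z : BState S0 S1,
          npi x * (LCtrunc S0 S1 n q x z - q x z) * d z y)
    (g : BState S0 S1 → ℝ) (hg : ∀ y, 1 ≤ g y ∧ g y ≤ f y) :
    (∑' y, |pi y - npi y| * g y) ≤
      Efun S0 S1 n q npi v C * ∑' z, pi z * g z := by
  set A : ℝ := ∑' z, pi z * g z with hA
  have hpis : Summable pi := by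
    by_contra h
    rw [tsum_eq_zero_of_not_summable h] at hpi1
    exact zero_ne_one hpi1
  have hg0 : ∀ y, 0 ≤ g y := fun y => zero_le_one.trans (hg y).1
  have hpig : Summable fun z => pi z * g z :=
    Summable.of_nonneg_of_le (fun z => mul_nonneg (hpi0 z) (hg0 z))
      (fun z => mul_le_mul_of_nonneg_left (hg z).2 (hpi0 z)) hpif
  have hA1 : 1 ≤ A := by
    rw [← hpi1]
    exact hpis.tsum_le_tsum (fun z => le_mul_of_one_le_right (hpi0 z) (hg z).1) hpig
  -- Row bound for the deviation matrix, with `A + 1` absorbed into `2 * A`.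
  have hD : ∀ z, ∑' y, ENNReal.ofReal (|d z y| * g y) ≤ ENNReal.ofReal (2 * A * (v z + C)) := by
    intro z
    have hs : Summable fun y => |d z y| * g y :=
      Summable.of_nonneg_of_le (fun y => mul_nonneg (abs_nonneg _) (hg0 y))
        (fun y => mul_le_mul_of_nonneg_left (hg y).2 (abs_nonneg _)) (ha1 z)
    rw [← ENNReal.ofReal_tsum_of_nonneg (fun y => mul_nonneg (abs_nonneg _) (hg0 y)) hs]
    refine ENNReal.ofReal_le_ofReal ((ha2 g (fun y => ⟨hg0 y, (hg y).2⟩) z).trans ?_)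
    exact mul_le_mul_of_nonneg_right (by linarith) (add_nonneg (hv z) hC)
  set I : BState S0 S1 → ℝ := fun x => ∑' y : BState S0 S1,
    (if n < y.1.1 then q x y * (v y + vAt S0 S1 v n y.1.2 + 2 * C) else 0) with hI
  have hI0 : ∀ x : BState S0 S1, x.1.1 ≤ n → 0 ≤ I x := by
    intro x hx
    refine tsum_nonneg fun y => ?_
    split_ifs with h
    · have := hq.1 x y (by rintro rfl; omega)
      have := hv y
      have := vAt_nonneg hv n y.1.2
      positivity
    · exact le_rfl
  have hE : Efun S0 S1 n q npi v C * A =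
      ∑' x : BState S0 S1, if x.1.1 ≤ n then npi x * (2 * A * I x) else 0 := by
    rw [Efun, mul_right_comm, ← tsum_mul_left]
    refine tsum_congr fun x => ?_
    split_ifs
    · simp only [hI]
      ring
    · simp
  have hterm0 : ∀ x : BState S0 S1, 0 ≤ if x.1.1 ≤ n then npi x * (2 * A * I x) else 0 := by
    intro x
    split_ifs with h
    · exact mul_nonneg (hnpi0 x) (mul_nonneg (by linarith) (hI0 x h))
    · exact le_rfl
  have hsum : Summable fun x : BState S0 S1 =>
      if x.1.1 ≤ n then npi x * (2 * A * I x) else 0 := by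
    refine summable_of_hasFiniteSupport ((finite_levels n).subset fun x hx => ?_)
    by_contra h
    have h : ¬ x.1.1 ≤ n := h
    simp [h] at hx
  rw [hE]
  refine tsum_le_of_ofReal (fun y => mul_nonneg (abs_nonneg _) (hg0 y)) (tsum_nonneg hterm0) ?_
  rw [ENNReal.ofReal_tsum_of_nonneg hterm0 hsum]
  set Δ : BState S0 S1 → BState S0 S1 → ℝ := fun x z => LCtrunc S0 S1 n q x z - q x z with hΔ
  calc ∑' y, ENNReal.ofReal (|pi y - npi y| * g y)
      ≤ ∑' y, ∑' x, ∑' z, ENNReal.ofReal (npi x) *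
          (ENNReal.ofReal |Δ x z| * ENNReal.ofReal (|d z y| * g y)) := by
        refine ENNReal.tsum_le_tsum fun y => ?_
        rw [abs_sub_comm, (hc y).2, ENNReal.ofReal_mul (abs_nonneg _)]
        refine (mul_le_mul_left ((ofReal_abs_tsum_le _).trans
          (ENNReal.tsum_le_tsum fun x => ofReal_abs_tsum_le _)) _).trans_eq ?_
        simp_rw [← ENNReal.tsum_mul_right]
        refine tsum_congr fun x => tsum_congr fun z => ?_
        rw [abs_mul, abs_mul, abs_of_nonneg (hnpi0 x), ENNReal.ofReal_mul (by
          exact mul_nonneg (hnpi0 x) (abs_nonneg _)), ENNReal.ofReal_mul (hnpi0 x),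
          ENNReal.ofReal_mul (abs_nonneg _)]
        ring
    _ = ∑' x, ENNReal.ofReal (npi x) * ∑' z, ENNReal.ofReal |Δ x z| *
          ∑' y, ENNReal.ofReal (|d z y| * g y) := by
        rw [ENNReal.tsum_comm]
        refine tsum_congr fun x => ?_
        rw [ENNReal.tsum_comm]
        simp_rw [ENNReal.tsum_mul_left]
    _ ≤ _ := by
        refine ENNReal.tsum_le_tsum fun x => ?_
        by_cases hx : x.1.1 ≤ n
        · rw [if_pos hx, ENNReal.ofReal_mul (hnpi0 x),
            ← ofReal_row hn hq hx hv hC (by linarith : 0 ≤ 2 * A) (hb x hx)]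
          refine mul_le_mul_right (le_trans (ENNReal.tsum_le_tsum fun z => ?_)
            (tsum_diff_le hn hq hx fun z => ENNReal.ofReal (2 * A * (v z + C)))) _
          gcongr
          exact hD z
        · simp [hvanish x (not_le.1 hx)]
end

section
/- Let Q be a q-matrix on F with the given block structure satisfying the f-modulated drift condition with data (b, K, v, f). Let π : F → [0,∞) satisfy Σ_{x∈F} π(x) = 1, Σ_{x∈F} π(x) q(x;y) = 0 for every y ∈ F (the series converging absolutely), and Σ_{x∈F} Σ_{y∈F} π(x) |q(x;y)| v(y) < ∞. Then Σ_{x∈F} π(x) f(x) ≤ b. -/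
/-- The `f`-modulated drift condition with data `(b, K, v, f)`:
`Q v ≤ -f + b 1_{F_K}`, each row series `Σ_y q(x;y) v(y)` converging. -/
def DriftCond (S0 S1 : ℕ) (q : BState S0 S1 → BState S0 S1 → ℝ)
    (b : ℝ) (K : ℕ) (v f : BState S0 S1 → ℝ) : Prop :=
  0 < b ∧ (∀ x, 0 ≤ v x) ∧ (∀ x, 1 ≤ f x) ∧
    ∀ x : BState S0 S1, Summable (fun y => q x y * v y) ∧
      (∑' y, q x y * v y) ≤ - f x + b * (if x.1.1 ≤ K then 1 else 0)

/-- First inequality of the paper's Lemma 2.4: a stationary distribution vector of a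
q-matrix satisfying the `f`-modulated drift condition has `π f ≤ b`. -/
theorem stmt5 (S0 S1 : ℕ) (q : BState S0 S1 → BState S0 S1 → ℝ)
    (b : ℝ) (K : ℕ) (v f : BState S0 S1 → ℝ)
    (hq : IsQMatrix q) (hdrift : DriftCond S0 S1 q b K v f)
    (pi : BState S0 S1 → ℝ)
    (hpi0 : ∀ x, 0 ≤ pi x) (hpi1 : (∑' x, pi x) = 1)
    (hstat : ∀ y, Summable (fun x => |pi x * q x y|) ∧ (∑' x, pi x * q x y) = 0)
    (hfin : Summable (fun p : BState S0 S1 × BState S0 S1 =>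
      pi p.1 * |q p.1 p.2| * v p.2)) :
    Summable (fun x => pi x * f x) ∧ (∑' x, pi x * f x) ≤ b := by
  obtain ⟨hb, hv, hf, hd⟩ := hdrift
  have hg : Summable (fun p : BState S0 S1 × BState S0 S1 => pi p.1 * q p.1 p.2 * v p.2) := by
    refine Summable.of_norm (hfin.congr fun p => ?_)
    rw [Real.norm_eq_abs, abs_mul, abs_mul, abs_of_nonneg (hpi0 _), abs_of_nonneg (hv _)]
  -- A non-summable family would have `tsum` equal to `0`.
  have hpis : Summable pi := by
    by_contra h
    rw [tsum_eq_zero_of_not_summable h] at hpi1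
    exact zero_ne_one hpi1
  have hG : Summable (fun x => ∑' y, pi x * q x y * v y) := hg.prod
  have hG0 : ∑' x, ∑' y, pi x * q x y * v y = 0 := by
    rw [Summable.tsum_comm (f := fun y x => pi x * q x y * v y) hg.prod_symm]
    simp_rw [tsum_mul_right, (hstat _).2, zero_mul, tsum_zero]
  have hle : ∀ x, pi x * f x ≤ b * pi x - ∑' y, pi x * q x y * v y := by
    intro x
    have h1 : (∑' y, q x y * v y) ≤ - f x + b := by
      refine (hd x).2.trans ?_
      split_ifs <;> linarith
    have h2 := mul_le_mul_of_nonneg_left h1 (hpi0 x)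
    simp_rw [mul_assoc, tsum_mul_left]
    linarith
  have hR := (hpis.mul_left b).sub hG
  have hS : Summable (fun x => pi x * f x) :=
    hR.of_nonneg_of_le (fun x => mul_nonneg (hpi0 x) (zero_le_one.trans (hf x))) hle
  refine ⟨hS, (hS.tsum_le_tsum hle hR).trans_eq ?_⟩
  rw [(hpis.mul_left b).tsum_sub hG, hG0, tsum_mul_left, hpi1, mul_one, sub_zero]
end

section
/- Let Q be a q-matrix on F with the given block structure satisfying the f-modulated drift condition with data (b, K, v, f), and assume v is level-wise nondecreasing on F̄₀, i.e., v(k,j) ≤ v(k+1,j) for all k ≥ 1 and 0 ≤ j ≤ S₁. Fix n ≥ 1 and let ₙQ be the LC-block-augmented truncation of Q. Then: (i) for every x = (k,i) ∈ F the series Σ_{y∈F} ₙq(x;y) v(y) converges and Σ_{y∈F} ₙq(x;y) v(y) ≤ Σ_{y∈F} q(x;y) v(y) ≤ −f(x) + b·1[x ∈ F_K]; (ii) if moreover ₙπ : F → [0,∞) satisfies Σ_{x} ₙπ(x) = 1, Σ_{x} ₙπ(x) ₙq(x;y) = 0 for every y (absolutely convergent), and Σ_{x}Σ_{y} ₙπ(x)|ₙq(x;y)|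 v(y) < ∞, then Σ_{x} ₙπ(x) f(x) ≤ b. -/
/-- The part of row `x` of `q` which the truncation at level `n` moves to level `n`: the entries at
levels above `n` other than the level of `x`, extended by zero to all of `ℕ × ℕ`. -/
noncomputable def movedMass {S0 S1 : ℕ} (n : ℕ) (q : BState S0 S1 → BState S0 S1 → ℝ)
    (x : BState S0 S1) (p : ℕ × ℕ) : ℝ :=
  if h : (n < p.1 ∧ p.1 ≠ x.1.1) ∧ p.2 ≤ (if p.1 = 0 then S0 else S1)
    then q x ⟨(p.1, p.2), h.2⟩ else 0

lemma movedMass_nonneg {S0 S1 : ℕ} (n : ℕ) {q : BState S0 S1 → BState S0 S1 → ℝ}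
    (hq : ∀ x y, x ≠ y → 0 ≤ q x y) (x : BState S0 S1) (p : ℕ × ℕ) : 0 ≤ movedMass n q x p := by
  unfold movedMass
  by_cases h : (n < p.1 ∧ p.1 ≠ x.1.1) ∧ p.2 ≤ (if p.1 = 0 then S0 else S1)
  · rw [dif_pos h]
    exact hq _ _ fun hx => h.1.2 (congrArg (fun y : BState S0 S1 => y.1.1) hx).symm
  · rw [dif_neg h]

lemma movedMass_coe {S0 S1 : ℕ} (n : ℕ) (q : BState S0 S1 → BState S0 S1 → ℝ)
    (x y : BState S0 S1) :
    movedMass n q x y.1 = if n < y.1.1 ∧ y.1.1 ≠ x.1.1 then q x y else 0 := by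
  have hy := y.2
  unfold movedMass
  by_cases h : n < y.1.1 ∧ y.1.1 ≠ x.1.1
  · rw [dif_pos ⟨h, hy⟩, if_pos h]
  · rw [dif_neg (fun h' => h h'.1), if_neg h]

lemma LCtrunc_eq {S0 S1 : ℕ} (n : ℕ) (q : BState S0 S1 → BState S0 S1 → ℝ)
    (x y : BState S0 S1) :
    LCtrunc S0 S1 n q x y = (q x y - movedMass n q x y.1) +
      if y.1.1 = n then ∑' m, movedMass n q x (m, y.1.2) else 0 := by
  rw [movedMass_coe]
  unfold LCtrunc
  rcases lt_trichotomy y.1.1 n with h | h | h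
  · simp [h, h.ne, h.not_gt]
  · simp [h, movedMass]
  · by_cases hk : y.1.1 = x.1.1
    · rw [if_neg h.not_gt, if_neg h.ne', if_pos hk, if_neg (fun h' => h'.2 hk), if_neg h.ne']
      ring
    · rw [if_neg h.not_gt, if_neg h.ne', if_neg hk, if_pos ⟨h, hk⟩, if_neg h.ne']
      ring

lemma vAt_coe {S0 S1 : ℕ} (v : BState S0 S1 → ℝ) (y : BState S0 S1) :
    vAt S0 S1 v y.1.1 y.1.2 = v y := by
  have hy := y.2
  unfold vAt
  rw [dif_pos hy]

/-- Since `vAt` extends `v` by zero, sums against `v` over `F` are sums over `ℕ × ℕ`. -/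
lemma hasSum_mul_vAt_iff {S0 S1 : ℕ} (g : ℕ × ℕ → ℝ) (v : BState S0 S1 → ℝ) (a : ℝ) :
    HasSum (fun y : BState S0 S1 => g y.1 * v y) a ↔
      HasSum (fun p : ℕ × ℕ => g p * vAt S0 S1 v p.1 p.2) a := by
  rw [← (Subtype.val_injective
    (p := fun p : ℕ × ℕ => p.2 ≤ if p.1 = 0 then S0 else S1)).hasSum_iff]
  · simp only [Function.comp_def, vAt_coe]
  · intro p hp
    have hp' : ¬ p.2 ≤ if p.1 = 0 then S0 else S1 := fun h => hp ⟨⟨p, h⟩, rfl⟩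
    rw [vAt, dif_neg hp', mul_zero]

lemma vAt_mono {S0 S1 : ℕ} {v : BState S0 S1 → ℝ}
    (hmono : ∀ k j : ℕ, 1 ≤ k → j ≤ S1 → vAt S0 S1 v k j ≤ vAt S0 S1 v (k + 1) j)
    {n m j : ℕ} (hn : 1 ≤ n) (hj : j ≤ S1) (hnm : n ≤ m) :
    vAt S0 S1 v n j ≤ vAt S0 S1 v m j := by
  induction m, hnm using Nat.le_induction with
  | base => exact le_rfl
  | succ m hm ih => exact ih.trans (hmono m j (hn.trans hm) hj)

/-- Entry by entry, moving mass down to level `n` does not increase its weight under `v`; off `F` both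
sides vanish. -/
lemma movedMass_mul_le {S0 S1 : ℕ} {q : BState S0 S1 → BState S0 S1 → ℝ}
    {v : BState S0 S1 → ℝ} (hq : ∀ x y, x ≠ y → 0 ≤ q x y)
    (hmono : ∀ k j : ℕ, 1 ≤ k → j ≤ S1 → vAt S0 S1 v k j ≤ vAt S0 S1 v (k + 1) j)
    {n : ℕ} (hn : 1 ≤ n) (x : BState S0 S1) (p : ℕ × ℕ) :
    movedMass n q x p * vAt S0 S1 v n p.2 ≤ movedMass n q x p * vAt S0 S1 v p.1 p.2 := by
  by_cases h : (n < p.1 ∧ p.1 ≠ x.1.1) ∧ p.2 ≤ (if p.1 = 0 then S0 else S1)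
  · have hj : p.2 ≤ S1 := by
      have := h.2
      rwa [if_neg (by omega)] at this
    exact mul_le_mul_of_nonneg_left (vAt_mono hmono hn hj h.1.1.le) (movedMass_nonneg n hq x p)
  · have : movedMass n q x p = 0 := dif_neg h
    simp [this]

/-- The row inequality `ₙQ v ≤ Q v`, with convergence of the left-hand series. -/
lemma LCtrunc_row {S0 S1 : ℕ} {q : BState S0 S1 → BState S0 S1 → ℝ}
    {v : BState S0 S1 → ℝ} (hq : ∀ x y, x ≠ y → 0 ≤ q x y) (hv : ∀ x, 0 ≤ v x)
    (hmono : ∀ k j : ℕ, 1 ≤ k → j ≤ S1 → vAt S0 S1 v k j ≤ vAt S0 S1 v (k + 1) j)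
    {n : ℕ} (hn : 1 ≤ n) (x : BState S0 S1) (hs : Summable (fun y => q x y * v y)) :
    Summable (fun y => LCtrunc S0 S1 n q x y * v y) ∧
      (∑' y, LCtrunc S0 S1 n q x y * v y) ≤ ∑' y, q x y * v y := by
  have hv0 : ∀ k j, 0 ≤ vAt S0 S1 v k j := by
    intro k j
    unfold vAt
    by_cases h : j ≤ (if k = 0 then S0 else S1)
    · rw [dif_pos h]
      exact hv _
    · rw [dif_neg h]
  obtain ⟨A, hA⟩ : ∃ A, A = movedMass n q x := ⟨_, rfl⟩
  have hA0 : ∀ p, 0 ≤ A p := hA ▸ movedMass_nonneg n hq x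
  -- The moved mass weighted by `v`, before the move: on `F`, and on `ℕ × ℕ`.
  have sA : Summable (fun y : BState S0 S1 => A y.1 * v y) := by
    refine Summable.of_norm_bounded hs.norm fun y => ?_
    rw [hA, movedMass_coe]
    split_ifs <;> simp [abs_nonneg, mul_nonneg]
  let W : ℕ × ℕ → ℝ := fun p => A p * vAt S0 S1 v p.1 p.2
  have hW : HasSum W (∑' y : BState S0 S1, A y.1 * v y) :=
    (hasSum_mul_vAt_iff A v _).1 sA.hasSum
  have hW' : HasSum (fun p : ℕ × ℕ => W p.swap) (∑' y : BState S0 S1, A y.1 * v y) :=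
    ((Equiv.prodComm ℕ ℕ).hasSum_iff (f := W)).2 hW
  have sCol : ∀ j, Summable fun m => W (m, j) := by
    intro j
    exact hW'.summable.prod_factor j
  have hCol : HasSum (fun j => ∑' m, W (m, j)) (∑' y : BState S0 S1, A y.1 * v y) := by
    exact hW'.prod_fiberwise fun j => (sCol j).hasSum
  -- The weighted mass arriving at `(n, j)`, compared with its weight before the move.
  let D : ℕ → ℝ := fun j => (∑' m, A (m, j)) * vAt S0 S1 v n j
  have hD0 : ∀ j, 0 ≤ D j := by
    intro j
    exact mul_nonneg (tsum_nonneg fun m => hA0 _) (hv0 _ _)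
  have hDle : ∀ j, D j ≤ ∑' m, W (m, j) := by
    intro j
    have hle : ∀ m, A (m, j) * vAt S0 S1 v n j ≤ W (m, j) := by
      subst hA
      exact fun m => movedMass_mul_le hq hmono hn x (m, j)
    simp only [D]
    rw [← tsum_mul_right]
    exact (Summable.of_nonneg_of_le (fun m => mul_nonneg (hA0 _) (hv0 _ _)) hle
      (sCol j)).tsum_le_tsum hle (sCol j)
  have sD : Summable D := Summable.of_nonneg_of_le hD0 hDle hCol.summable
  have hDsum : ∑' j, D j ≤ ∑' y : BState S0 S1, A y.1 * v y :=
    hasSum_le hDle sD.hasSum hCol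
  let B : ℕ × ℕ → ℝ := fun p =>
    (if p.1 = n then ∑' m, A (m, p.2) else 0) * vAt S0 S1 v p.1 p.2
  have hB : HasSum B (∑' j, D j) := by
    have hinj : Function.Injective fun j : ℕ => (n, j) := fun a b h => by simpa using h
    have hBD : B ∘ (fun j : ℕ => (n, j)) = D := by
      funext j
      simp [B, D]
    have hB0 : ∀ p ∉ Set.range fun j : ℕ => (n, j), B p = 0 := by
      rintro ⟨k, j⟩ hp
      have hk : k ≠ n := by
        rintro rfl
        exact hp ⟨j, rfl⟩
      simp [B, hk]
    rw [← hinj.hasSum_iff hB0, hBD]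
    exact sD.hasSum
  have hBF : HasSum (fun y : BState S0 S1 =>
      (if y.1.1 = n then ∑' m, A (m, y.1.2) else 0) * v y) (∑' j, D j) := by
    exact (hasSum_mul_vAt_iff (fun p => if p.1 = n then ∑' m, A (m, p.2) else 0) v _).2 hB
  have hfin : HasSum (fun y => LCtrunc S0 S1 n q x y * v y)
      ((∑' y, q x y * v y) - (∑' y : BState S0 S1, A y.1 * v y) + ∑' j, D j) := by
    have h : (fun y => LCtrunc S0 S1 n q x y * v y) = fun y => q x y * v y - A y.1 * v y +
        (if y.1.1 = n then ∑' m, A (m, y.1.2) else 0) * v y := by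
      funext y
      rw [LCtrunc_eq, ← hA]
      ring
    rw [h]
    exact (hs.hasSum.sub sA.hasSum).add hBF
  exact ⟨hfin.summable, by rw [hfin.tsum_eq]; linarith⟩

/-- Second part of the paper's Lemma 2.4, together with the key intermediate
inequality `ₙQ v ≤ Q v`: if `v` is level-wise nondecreasing on `F̄₀`, then
(i) `ₙQ v ≤ Q v ≤ -f + b 1_{F_K}` and (ii) any stationary distribution vector
`ₙπ` of `ₙQ` satisfies `ₙπ f ≤ b`. -/
theorem stmt6 (S0 S1 : ℕ) (q : BState S0 S1 → BState S0 S1 → ℝ)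
    (b : ℝ) (K : ℕ) (v f : BState S0 S1 → ℝ)
    (hq : IsQMatrix q) (hdrift : DriftCond S0 S1 q b K v f)
    (hmono : ∀ k j : ℕ, 1 ≤ k → j ≤ S1 → vAt S0 S1 v k j ≤ vAt S0 S1 v (k + 1) j)
    (n : ℕ) (hn : 1 ≤ n) :
    (∀ x : BState S0 S1,
      Summable (fun y => LCtrunc S0 S1 n q x y * v y) ∧
      (∑' y, LCtrunc S0 S1 n q x y * v y) ≤ (∑' y, q x y * v y) ∧
      (∑' y, q x y * v y) ≤ - f x + b * (if x.1.1 ≤ K then 1 else 0)) ∧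
    (∀ npi : BState S0 S1 → ℝ, (∀ x, 0 ≤ npi x) → (∑' x, npi x) = 1 →
      (∀ y, Summable (fun x => |npi x * LCtrunc S0 S1 n q x y|) ∧
        (∑' x, npi x * LCtrunc S0 S1 n q x y) = 0) →
      Summable (fun p : BState S0 S1 × BState S0 S1 =>
        npi p.1 * |LCtrunc S0 S1 n q p.1 p.2| * v p.2) →
      Summable (fun x => npi x * f x) ∧ (∑' x, npi x * f x) ≤ b) := by
  obtain ⟨hb, hv, hf, hd⟩ := hdrift
  have hrow : ∀ x : BState S0 S1, _ := fun x => LCtrunc_row hq.1 hv hmono hn x (hd x).1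
  refine ⟨fun x => ⟨(hrow x).1, (hrow x).2, (hd x).2⟩, ?_⟩
  intro npi hpi hsum hstat habs
  -- The sum of a non-summable family is `0`, so a family with sum `1` is summable.
  have spi : Summable npi := by
    by_contra h
    rw [tsum_eq_zero_of_not_summable h] at hsum
    exact zero_ne_one hsum
  have sP : Summable (fun p : BState S0 S1 × BState S0 S1 =>
      npi p.1 * LCtrunc S0 S1 n q p.1 p.2 * v p.2) := by
    refine Summable.of_abs (habs.congr fun p => ?_)
    rw [abs_mul, abs_mul, abs_of_nonneg (hpi _), abs_of_nonneg (hv _)]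
  have hx : ∀ x, ∑' y, npi x * LCtrunc S0 S1 n q x y * v y =
      npi x * ∑' y, LCtrunc S0 S1 n q x y * v y := by
    intro x
    rw [← tsum_mul_left]
    simp only [mul_assoc]
  have hI : HasSum (fun x => npi x * ∑' y, LCtrunc S0 S1 n q x y * v y) 0 := by
    have h1 := sP.prod.hasSum
    have h2 : ∑' x, ∑' y, npi x * LCtrunc S0 S1 n q x y * v y = 0 := by
      rw [← Summable.tsum_comm (f := fun x y => npi x * LCtrunc S0 S1 n q x y * v y) sP]
      simp only [tsum_mul_right, (hstat _).2, zero_mul, tsum_zero]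
    rw [h2] at h1
    simpa only [hx] using h1
  have hle : ∀ x, npi x * f x ≤
      npi x * b - npi x * ∑' y, LCtrunc S0 S1 n q x y * v y := by
    intro x
    rw [← mul_sub]
    apply mul_le_mul_of_nonneg_left _ (hpi x)
    have h1 := (hrow x).2
    have h2 := (hd x).2
    split_ifs at h2 <;> linarith
  have hR : HasSum (fun x => npi x * b - npi x * ∑' y, LCtrunc S0 S1 n q x y * v y) b := by
    have h := (spi.hasSum.mul_right b).sub hI
    rwa [hsum, one_mul, sub_zero] at h
  have sf : Summable (fun x => npi x * f x) :=
    Summable.of_nonneg_of_le (fun x => mul_nonneg (hpi x) (zero_le_one.trans (hf x))) hle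
      hR.summable
  exact ⟨sf, hasSum_le hle sf.hasSum hR⟩
end

section
/- Let Q be a q-matrix on F with the given block structure, fix n ≥ 1, and let ₙπ : F → [0,∞) be a probability vector vanishing outside F_n. Let V, T : [0,∞) → [1,∞) be nondecreasing functions satisfying V(x+y) ≤ V(x)V(y) and T(x+y) ≤ T(x)T(y) for all x, y ≥ 0, let a : {0,…,S₁} → (0,∞) with ā := min_j a(j), and let v : F → [0,∞) satisfy v(k,j) = V(k)·a(j) for all k ≥ 1 and 0 ≤ j ≤ S₁. Let f^♯ : F → [1,∞), b^♯ > 0, C ≥ 0, and r₀, r₁ > 0 satisfy: T(k)V(k) ≤ r₀·f^♯(k,i) for every (k,i) ∈ F; for all k, ℓ ∈ ℕ₀ and every i, T(ℓ)·Σ_{m=ℓ+1}^∞ Σ_j q(k,i;k+m,j) V(m) a(j) ≤ r₁ (the series converging); and Σ_{(k,i)∈F} ₙπ(k,i) f^♯(k,i) ≤ b^♯. Then E⁺(n) ≤ (4 r₀ r₁ b^♯ / T(n)) · (1 + (C/ā)/V(n+1)), where E⁺(n) := 4 Σ_{(k,i)∈F_n} ₙπ(k,i) Σ_{(m,j)∈F̄_n}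 q(k,i;m,j) (v(m,j) + C). -/
/-- The error decay function
`E⁺(n) = 4 Σ_{(k,i)∈F_n} ₙπ(k,i) Σ_{(m,j)∈F̄_n} q(k,i;m,j) (v(m,j) + C)`. -/
noncomputable def Eplus (S0 S1 n : ℕ) (q : BState S0 S1 → BState S0 S1 → ℝ)
    (npi v : BState S0 S1 → ℝ) (C : ℝ) : ℝ :=
  4 * ∑' x : BState S0 S1,
    (if x.1.1 ≤ n then
      npi x * ∑' y : BState S0 S1, (if n < y.1.1 then q x y * (v y + C) else 0)
     else 0)

/-- Bound (2.40) of the paper's Theorem 2.4: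
`E⁺(n) ≤ (4 r₀ r₁ b♯ / T(n)) (1 + (C/ā)/V(n+1))`. -/
theorem stmt10 (S0 S1 : ℕ) (n : ℕ) (hn : 1 ≤ n)
    (q : BState S0 S1 → BState S0 S1 → ℝ) (hq : IsQMatrix q)
    (npi : BState S0 S1 → ℝ) (hnpi0 : ∀ x, 0 ≤ npi x) (hnpi1 : (∑' x, npi x) = 1)
    (hvanish : ∀ x : BState S0 S1, n < x.1.1 → npi x = 0)
    (V T : ℝ → ℝ)
    (hV1 : ∀ x : ℝ, 0 ≤ x → 1 ≤ V x) (hT1 : ∀ x : ℝ, 0 ≤ x → 1 ≤ T x)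
    (hVmono : ∀ x y : ℝ, 0 ≤ x → x ≤ y → V x ≤ V y)
    (hTmono : ∀ x y : ℝ, 0 ≤ x → x ≤ y → T x ≤ T y)
    (hVsub : ∀ x y : ℝ, 0 ≤ x → 0 ≤ y → V (x + y) ≤ V x * V y)
    (hTsub : ∀ x y : ℝ, 0 ≤ x → 0 ≤ y → T (x + y) ≤ T x * T y)
    (a : ℕ → ℝ) (ha : ∀ j, j ≤ S1 → 0 < a j)
    (abar : ℝ) (habar1 : ∀ j, j ≤ S1 → abar ≤ a j)
    (habar2 : ∃ j, j ≤ S1 ∧ a j = abar)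
    (v : BState S0 S1 → ℝ) (hv0 : ∀ x, 0 ≤ v x)
    (hva : ∀ x : BState S0 S1, 1 ≤ x.1.1 → v x = V x.1.1 * a x.1.2)
    (fs : BState S0 S1 → ℝ) (hfs : ∀ x, 1 ≤ fs x)
    (bs : ℝ) (hbs : 0 < bs) (C : ℝ) (hC : 0 ≤ C)
    (r0 r1 : ℝ) (hr0pos : 0 < r0) (hr1pos : 0 < r1)
    (hr0 : ∀ x : BState S0 S1, T x.1.1 * V x.1.1 ≤ r0 * fs x)
    (hr1 : ∀ (x : BState S0 S1) (l : ℕ),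
      Summable (fun y : BState S0 S1 =>
        if x.1.1 + l < y.1.1 then q x y * V ((y.1.1 - x.1.1 : ℕ) : ℝ) * a y.1.2
        else 0) ∧
      T l * (∑' y : BState S0 S1,
        if x.1.1 + l < y.1.1 then q x y * V ((y.1.1 - x.1.1 : ℕ) : ℝ) * a y.1.2
        else 0) ≤ r1)
    (hnpifs : Summable (fun x => npi x * fs x) ∧ (∑' x, npi x * fs x) ≤ bs) :
    Eplus S0 S1 n q npi v C ≤
      4 * r0 * r1 * bs / T n * (1 + C / abar / V ((n : ℝ) + 1)) := by
  have habar : 0 < abar := by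
    obtain ⟨j, hj, rfl⟩ := habar2
    exact ha j hj
  have hVn : 0 < V ((n : ℝ) + 1) := lt_of_lt_of_le one_pos (hV1 _ (by positivity))
  have hTn : 0 < T n := lt_of_lt_of_le one_pos (hT1 _ (by positivity))
  set D : ℝ := 1 + C / abar / V ((n : ℝ) + 1) with hD
  have hDpos : 0 < D := by positivity
  have hlev : ∀ y : BState S0 S1, n < y.1.1 → y.1.2 ≤ S1 := by
    intro y hy
    have h := y.2
    rwa [if_neg (by omega)] at h
  have hqn : ∀ x y : BState S0 S1, x.1.1 ≤ n → n < y.1.1 → 0 ≤ q x y := by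
    intro x y hx hy
    refine hq.1 x y ?_
    rintro rfl
    omega
  have hinner0 : ∀ x : BState S0 S1, x.1.1 ≤ n →
      0 ≤ ∑' y : BState S0 S1, (if n < y.1.1 then q x y * (v y + C) else 0) := by
    intro x hx
    refine tsum_nonneg fun y => ?_
    split_ifs with hy
    · exact mul_nonneg (hqn x y hx hy) (add_nonneg (hv0 y) hC)
    · exact le_rfl
  have hterm : ∀ x y : BState S0 S1, x.1.1 ≤ n → n < y.1.1 →
      q x y * (v y + C) ≤
        D * V x.1.1 * (q x y * V ((y.1.1 - x.1.1 : ℕ) : ℝ) * a y.1.2) := by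
    intro x y hx hy
    have haj := habar1 _ (hlev y hy)
    have hajp := ha _ (hlev y hy)
    have hVy : V ((n : ℝ) + 1) ≤ V y.1.1 :=
      hVmono _ _ (by positivity) (by exact_mod_cast hy)
    have hVs : V y.1.1 ≤ V x.1.1 * V ((y.1.1 - x.1.1 : ℕ) : ℝ) := by
      have h := hVsub (x.1.1 : ℝ) ((y.1.1 - x.1.1 : ℕ) : ℝ) (by positivity) (by positivity)
      rwa [← Nat.cast_add, Nat.add_sub_cancel' (by omega)] at h
    -- `C ≤ V(m) a(j) (C/ā)/V(n+1)`, since `V(m) a(j) ≥ V(n+1) ā`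
    have hCle : C ≤ V y.1.1 * a y.1.2 * (C / abar / V ((n : ℝ) + 1)) := by
      calc C = V ((n : ℝ) + 1) * abar * (C / abar / V ((n : ℝ) + 1)) := by field_simp
        _ ≤ _ := by
          have := hVn.le.trans hVy
          gcongr
    calc q x y * (v y + C) ≤ q x y * (V y.1.1 * a y.1.2 * D) := by
          refine mul_le_mul_of_nonneg_left ?_ (hqn x y hx hy)
          rw [hva y (by omega), hD]
          linarith
      _ ≤ q x y * (V x.1.1 * V ((y.1.1 - x.1.1 : ℕ) : ℝ) * a y.1.2 * D) := by
          refine mul_le_mul_of_nonneg_left ?_ (hqn x y hx hy)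
          gcongr
      _ = _ := by ring
  have hinner : ∀ x : BState S0 S1, x.1.1 ≤ n →
      ∑' y : BState S0 S1, (if n < y.1.1 then q x y * (v y + C) else 0) ≤
        D * r0 * r1 / T n * fs x := by
    intro x hx
    obtain ⟨hs, hle⟩ := hr1 x (n - x.1.1)
    rw [Nat.add_sub_cancel' hx] at hs hle
    set S := ∑' y : BState S0 S1,
        if n < y.1.1 then q x y * V ((y.1.1 - x.1.1 : ℕ) : ℝ) * a y.1.2 else 0 with hS
    have hSnn : 0 ≤ S := by
      refine tsum_nonneg fun y => ?_
      split_ifs with hy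
      · have h1 := hV1 ((y.1.1 - x.1.1 : ℕ) : ℝ) (by positivity)
        exact mul_nonneg (mul_nonneg (hqn x y hx hy) (by linarith)) (ha _ (hlev y hy)).le
      · exact le_rfl
    have hpt : ∀ y : BState S0 S1, (if n < y.1.1 then q x y * (v y + C) else 0) ≤
        D * V x.1.1 *
          (if n < y.1.1 then q x y * V ((y.1.1 - x.1.1 : ℕ) : ℝ) * a y.1.2 else 0) := by
      intro y
      split_ifs with hy
      · exact hterm x y hx hy
      · simp
    have hs' := hs.mul_left (D * V x.1.1)
    have hsl : Summable fun y : BState S0 S1 =>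
        (if n < y.1.1 then q x y * (v y + C) else 0) := by
      refine Summable.of_nonneg_of_le (fun y => ?_) hpt hs'
      split_ifs with hy
      · exact mul_nonneg (hqn x y hx hy) (add_nonneg (hv0 y) hC)
      · exact le_rfl
    have h1 := hsl.tsum_le_tsum hpt hs'
    rw [tsum_mul_left, ← hS] at h1
    have hVk := hV1 (x.1.1 : ℝ) (by positivity)
    have hTk := hT1 (x.1.1 : ℝ) (by positivity)
    have hTs : T n ≤ T x.1.1 * T ((n - x.1.1 : ℕ) : ℝ) := by
      have h := hTsub (x.1.1 : ℝ) ((n - x.1.1 : ℕ) : ℝ) (by positivity) (by positivity)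
      rwa [← Nat.cast_add, Nat.add_sub_cancel' hx] at h
    have hST : T n * S ≤ T x.1.1 * r1 := by
      calc T n * S ≤ T x.1.1 * T ((n - x.1.1 : ℕ) : ℝ) * S := by gcongr
        _ = T x.1.1 * (T ((n - x.1.1 : ℕ) : ℝ) * S) := by ring
        _ ≤ _ := by gcongr
    refine h1.trans ?_
    rw [div_mul_eq_mul_div, le_div_iff₀ hTn]
    calc D * V x.1.1 * S * T n = D * V x.1.1 * (T n * S) := by ring
      _ ≤ D * V x.1.1 * (T x.1.1 * r1) := by gcongr
      _ = D * r1 * (T x.1.1 * V x.1.1) := by ring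
      _ ≤ D * r1 * (r0 * fs x) := mul_le_mul_of_nonneg_left (hr0 x) (by positivity)
      _ = _ := by ring
  have hpt : ∀ x : BState S0 S1,
      (if x.1.1 ≤ n then
        npi x * ∑' y : BState S0 S1, (if n < y.1.1 then q x y * (v y + C) else 0)
       else 0) ≤ D * r0 * r1 / T n * (npi x * fs x) := by
    intro x
    split_ifs with hx
    · calc _ ≤ npi x * (D * r0 * r1 / T n * fs x) :=
            mul_le_mul_of_nonneg_left (hinner x hx) (hnpi0 x)
        _ = _ := by ring
    · rw [hvanish x (by omega)]
      simp
  have hs' := hnpifs.1.mul_left (D * r0 * r1 / T n)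
  have hsl := Summable.of_nonneg_of_le (fun x => by
    split_ifs with hx
    · exact mul_nonneg (hnpi0 x) (hinner0 x hx)
    · exact le_rfl) hpt hs'
  have h1 := hsl.tsum_le_tsum hpt hs'
  rw [tsum_mul_left] at h1
  have h2 : D * r0 * r1 / T n * (∑' x, npi x * fs x) ≤ D * r0 * r1 / T n * bs :=
    mul_le_mul_of_nonneg_left hnpifs.2 (by positivity)
  unfold Eplus
  calc _ ≤ 4 * (D * r0 * r1 / T n * bs) :=
        mul_le_mul_of_nonneg_left (h1.trans h2) (by norm_num)
    _ = _ := by ring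
end

section
/- Let F be a countable set, π and π_n probability vectors on F, v : F → (0,∞), f : F → [1,∞), and suppose C̄ := sup_{x∈F} f(x)/v(x) < ∞. Define π̂(x) := π(x)(f(x)/v(x)) / Σ_{z∈F} π(z)(f(z)/v(z)) and π̂_n(x) := π_n(x)(f(x)/v(x)) / Σ_{z∈F} π_n(z)(f(z)/v(z)). Suppose Ê ≥ 0 is such that for every ĝ : F → ℝ with 0 < ĝ(x) ≤ v(x) for all x and Σ_x π̂(x) ĝ(x) < ∞, one has Σ_x |π̂(x) − π̂_n(x)| ĝ(x) ≤ Ê · Σ_x π̂(x) ĝ(x). Then Σ_{x∈F} |π(x) − π_n(x)| ≤ 2 Ê. -/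
/-!
Write `S` and `T` for the normalizing sums of `hatP pi f v` and `hatP pin f v`, and `c = S / T`.
Testing the hypothesis with `g = v / f` (at most `v` because `1 ≤ f`) cancels the reweighting and,
after multiplying by `S > 0`, gives `∑ |pi - c * pin| ≤ Ehat`. Summing without absolute values
gives `|1 - c| ≤ Ehat`, because `pi` and `pin` both have total mass one. The triangle inequality
`|pi - pin| ≤ |pi - c * pin| + |1 - c| * pin` then yields the factor two.
-/

/-- The transformed probability vector `π̂(x) = π(x)(f(x)/v(x)) / Σ_z π(z)(f(z)/v(z))`. -/
noncomputable def hatP {F : Type*} (p f v : F → ℝ) (x : F) : ℝ :=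
  p x * (f x / v x) / ∑' z, p z * (f z / v z)

/-- Total-variation bound (3.9) of the paper's Theorem 3.1. -/
theorem stmt11 {F : Type*} [Countable F] (v f : F → ℝ)
    (hv : ∀ x, 0 < v x) (hf : ∀ x, 1 ≤ f x)
    (Cbar : ℝ) (hCbar : ∀ x, f x / v x ≤ Cbar)
    (pi pin : F → ℝ)
    (hpi0 : ∀ x, 0 ≤ pi x) (hpi1 : (∑' x, pi x) = 1)
    (hpin0 : ∀ x, 0 ≤ pin x) (hpin1 : (∑' x, pin x) = 1)
    (Ehat : ℝ) (hEhat : 0 ≤ Ehat)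
    (hbound : ∀ g : F → ℝ, (∀ x, 0 < g x ∧ g x ≤ v x) →
      Summable (fun x => hatP pi f v x * g x) →
      (∑' x, |hatP pi f v x - hatP pin f v x| * g x) ≤
        Ehat * ∑' x, hatP pi f v x * g x) :
    (∑' x, |pi x - pin x|) ≤ 2 * Ehat := by
  set S := ∑' z, pi z * (f z / v z) with hS
  set T := ∑' z, pin z * (f z / v z) with hT
  have hf0 : ∀ x, 0 < f x := fun x => one_pos.trans_le (hf x)
  have hspi : Summable pi := by
    by_contra h
    simp [tsum_eq_zero_of_not_summable h] at hpi1
  have hspin : Summable pin := by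
    by_contra h
    simp [tsum_eq_zero_of_not_summable h] at hpin1
  have hSpos : 0 < S := by
    have hterm : ∀ x, 0 ≤ pi x * (f x / v x) := fun x =>
      mul_nonneg (hpi0 x) (div_pos (hf0 x) (hv x)).le
    have hsum : Summable fun x => pi x * (f x / v x) :=
      Summable.of_nonneg_of_le hterm
        (fun x => mul_le_mul_of_nonneg_left (hCbar x) (hpi0 x)) (hspi.mul_right Cbar)
    obtain ⟨x, hx⟩ : ∃ x, pi x ≠ 0 := by
      by_contra! h
      simp [h] at hpi1
    exact hsum.tsum_pos hterm x
      (mul_pos (lt_of_le_of_ne (hpi0 x) hx.symm) (div_pos (hf0 x) (hv x)))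
  -- The weight `v / f` cancels the factor `f / v` of the transformed vectors.
  have hcancel : ∀ (p : F → ℝ) x,
      hatP p f v x * (v x / f x) = p x / ∑' z, p z * (f z / v z) := by
    intro p x
    have h1 : f x / v x * (v x / f x) = 1 := by
      have := (hf0 x).ne'
      have := (hv x).ne'
      field_simp
    rw [hatP, div_mul_eq_mul_div, mul_assoc, h1, mul_one]
  have hg : ∀ x, 0 < v x / f x ∧ v x / f x ≤ v x := fun x =>
    ⟨div_pos (hv x) (hf0 x), div_le_self (hv x).le (hf x)⟩
  have hb := hbound (fun x => v x / f x) hg (by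
    simp only [hcancel]
    exact hspi.div_const _)
  have hterm : ∀ x, |hatP pi f v x - hatP pin f v x| * (v x / f x)
      = |pi x - S / T * pin x| / S := by
    intro x
    rw [← abs_of_pos (hg x).1, ← abs_mul, sub_mul, hcancel, hcancel,
      ← hS, ← hT]
    have hdiv : ∀ a : ℝ, |a| / S = |a / S| := fun a => by rw [abs_div, abs_of_pos hSpos]
    rw [hdiv]
    congr 1
    have := hSpos.ne'
    rw [sub_div, div_mul_eq_mul_div, div_div, mul_comm T S, mul_div_mul_left _ _ this]
  simp only [hterm, hcancel] at hb
  rw [tsum_div_const, tsum_div_const, hpi1, ← hS, mul_one_div,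
    div_le_div_iff_of_pos_right hSpos] at hb
  set c := S / T
  have hsd : Summable fun x => pi x - c * pin x := hspi.sub (hspin.mul_left c)
  have hc : |1 - c| ≤ Ehat := by
    have h1 : ∑' x, (pi x - c * pin x) = 1 - c := by
      rw [hspi.tsum_sub (hspin.mul_left c), tsum_mul_left, hpi1, hpin1, mul_one]
    have h2 : ‖∑' x, (pi x - c * pin x)‖ ≤ ∑' x, ‖pi x - c * pin x‖ :=
      norm_tsum_le_tsum_norm hsd.norm
    rw [h1] at h2
    exact h2.trans hb
  have hle : ∀ x, |pi x - pin x| ≤ |pi x - c * pin x| + |1 - c| * pin x := by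
    intro x
    have h : |(pi x - c * pin x) - (1 - c) * pin x| ≤ |pi x - c * pin x| + |(1 - c) * pin x| :=
      norm_sub_le (pi x - c * pin x) ((1 - c) * pin x)
    rw [abs_mul, abs_of_nonneg (hpin0 x)] at h
    have he : (pi x - c * pin x) - (1 - c) * pin x = pi x - pin x := by ring
    rwa [he] at h
  calc ∑' x, |pi x - pin x|
      ≤ ∑' x, (|pi x - c * pin x| + |1 - c| * pin x) :=
        (hspi.sub hspin).abs.tsum_le_tsum hle (hsd.abs.add (hspin.mul_left _))
    _ = ∑' x, |pi x - c * pin x| + |1 - c| := by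
        rw [hsd.abs.tsum_add (hspin.mul_left _), tsum_mul_left, hpin1, mul_one]
    _ ≤ 2 * Ehat := by linarith
end

section
/- Let F be a countable set, π and π_n probability vectors on F, v : F → (0,∞), f : F → [1,∞), and suppose C̄ := sup_{x∈F} f(x)/v(x) < ∞. Define π̂(x) := π(x)(f(x)/v(x)) / Σ_{z∈F} π(z)(f(z)/v(z)) and π̂_n(x) := π_n(x)(f(x)/v(x)) / Σ_{z∈F} π_n(z)(f(z)/v(z)). Suppose Σ_x π̂(x) v(x) ≤ b̂ for some b̂ > 0, and suppose Ê ≥ 0 is such that for every ĝ : F → ℝ with 0 < ĝ(x) ≤ v(x) for all x and Σ_x π̂(x) ĝ(x) < ∞, one has Σ_x |π̂(x) − π̂_n(x)| ĝ(x) ≤ Ê · Σ_x π̂(x) ĝ(x). Then for every g : F → ℝ with 0 < g(x) ≤ f(x) for all x, Σ_x |π(x) − π_n(x)| g(x) ≤ Ê · [1 + (1 + Ê)/max(1 − min(Ê,1), 1/(b̂ C̄))] · Σ_x π(x) g(x). -/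
/-- The weighted bound over all positive test functions `≤ v`, read with the convention that a
divergent `tsum` is `0`, already forces `Σ |p - q| v` to converge: the partial sum over a finite `A`
is controlled by the bound for the bounded test function equal to `v` on `A` and `min v 1` off
`A`. -/
lemma summable_abs_sub_mul {F : Type*} (p q v : F → ℝ) (hv : ∀ x, 0 < v x)
    (hp0 : ∀ x, 0 ≤ p x) (hp : Summable p) (hq : Summable q)
    (hpv : Summable (fun x => p x * v x)) (E : ℝ) (hE : 0 ≤ E)
    (hb : ∀ g : F → ℝ, (∀ x, 0 < g x ∧ g x ≤ v x) → Summable (fun x => p x * g x) →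
      (∑' x, |p x - q x| * g x) ≤ E * ∑' x, p x * g x) :
    Summable (fun x => |p x - q x| * v x) := by
  classical
  refine summable_of_sum_le (c := E * ∑' x, p x * v x)
    (fun x => mul_nonneg (abs_nonneg _) (hv x).le) (fun A => ?_)
  set g : F → ℝ := fun x => if x ∈ A then v x else min (v x) 1 with hg
  have hg1 : ∀ x, 0 < g x ∧ g x ≤ v x := by
    intro x
    by_cases hx : x ∈ A
    · simp [hg, hx, hv x]
    · simp [hg, hx, hv x]
  have hgM : ∀ x, g x ≤ 1 + ∑ y ∈ A, v y := by
    intro x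
    have h0 : 0 ≤ ∑ y ∈ A, v y := Finset.sum_nonneg fun y _ => (hv y).le
    by_cases hx : x ∈ A
    · have := Finset.single_le_sum (f := v) (fun y _ => (hv y).le) hx
      simp only [hg, hx, if_true]
      linarith
    · have := min_le_right (v x) 1
      simp only [hg, hx, if_false]
      linarith
  have hpg : Summable (fun x => p x * g x) :=
    hpv.of_nonneg_of_le (fun x => mul_nonneg (hp0 x) (hg1 x).1.le)
      (fun x => mul_le_mul_of_nonneg_left (hg1 x).2 (hp0 x))
  have hdg : Summable (fun x => |p x - q x| * g x) :=
    ((hp.sub hq).abs.mul_right (1 + ∑ y ∈ A, v y)).of_nonneg_of_le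
      (fun x => mul_nonneg (abs_nonneg _) (hg1 x).1.le)
      (fun x => mul_le_mul_of_nonneg_left (hgM x) (abs_nonneg _))
  calc ∑ x ∈ A, |p x - q x| * v x = ∑ x ∈ A, |p x - q x| * g x :=
        Finset.sum_congr rfl fun x hx => by simp [hg, hx]
    _ ≤ ∑' x, |p x - q x| * g x :=
        hdg.sum_le_tsum _ fun x _ => mul_nonneg (abs_nonneg _) (hg1 x).1.le
    _ ≤ E * ∑' x, p x * g x := hb g hg1 hpg
    _ ≤ E * ∑' x, p x * v x :=
        mul_le_mul_of_nonneg_left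
          (hpg.tsum_le_tsum (fun x => mul_le_mul_of_nonneg_left (hg1 x).2 (hp0 x)) hpv) hE

/-- For a probability vector `p`, with normalizing constant `S = Σ p f/v`: `0 < S ≤ C`, the
transformed vector is nonnegative and summable, and the transformation inverts as
`p = S p̂ v/f`. -/
lemma hatP_facts {F : Type*} (v f : F → ℝ) (hv : ∀ x, 0 < v x) (hf : ∀ x, 1 ≤ f x)
    (C : ℝ) (hC : ∀ x, f x / v x ≤ C) (p : F → ℝ) (hp0 : ∀ x, 0 ≤ p x)
    (hp1 : (∑' x, p x) = 1) :
    ∃ S : ℝ, 0 < S ∧ S ≤ C ∧ (∀ x, 0 ≤ hatP p f v x) ∧ Summable (hatP p f v) ∧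
      ∀ x, p x = S * (hatP p f v x * (v x / f x)) := by
  have hfv : ∀ x, 0 < f x / v x := fun x => div_pos (by linarith [hf x]) (hv x)
  have hp : Summable p := by
    by_contra h
    rw [tsum_eq_zero_of_not_summable h] at hp1
    exact zero_ne_one hp1
  have hle : ∀ x, p x * (f x / v x) ≤ p x * C :=
    fun x => mul_le_mul_of_nonneg_left (hC x) (hp0 x)
  have h0 : ∀ x, 0 ≤ p x * (f x / v x) := fun x => mul_nonneg (hp0 x) (hfv x).le
  have hs : Summable (fun x => p x * (f x / v x)) :=
    (hp.mul_right C).of_nonneg_of_le h0 hle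
  have hSC : (∑' x, p x * (f x / v x)) ≤ C := by
    have := hs.tsum_le_tsum hle (hp.mul_right C)
    rwa [tsum_mul_right, hp1, one_mul] at this
  have hS : 0 < ∑' x, p x * (f x / v x) := by
    obtain ⟨x, hx⟩ : ∃ x, p x ≠ 0 := by
      by_contra! h
      simp [h] at hp1
    exact hs.tsum_pos h0 x (mul_pos (lt_of_le_of_ne (hp0 x) (Ne.symm hx)) (hfv x))
  refine ⟨_, hS, hSC, fun x => div_nonneg (h0 x) hS.le, hs.div_const _, fun x => ?_⟩
  have h1 : f x ≠ 0 := by linarith [hf x]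
  have h2 := (hv x).ne'
  unfold hatP
  generalize (∑' z, p z * (f z / v z)) = S at hS
  field_simp

/-- Relative-error bound (3.10) of the paper's Theorem 3.1, in per-function form. -/
theorem stmt12 {F : Type*} [Countable F] (v f : F → ℝ)
    (hv : ∀ x, 0 < v x) (hf : ∀ x, 1 ≤ f x)
    (Cbar : ℝ) (hCbar : ∀ x, f x / v x ≤ Cbar)
    (pi pin : F → ℝ)
    (hpi0 : ∀ x, 0 ≤ pi x) (hpi1 : (∑' x, pi x) = 1)
    (hpin0 : ∀ x, 0 ≤ pin x) (hpin1 : (∑' x, pin x) = 1)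
    (bhat : ℝ) (hbhat : 0 < bhat)
    (hhatv : Summable (fun x => hatP pi f v x * v x) ∧
      (∑' x, hatP pi f v x * v x) ≤ bhat)
    (Ehat : ℝ) (hEhat : 0 ≤ Ehat)
    (hbound : ∀ g : F → ℝ, (∀ x, 0 < g x ∧ g x ≤ v x) →
      Summable (fun x => hatP pi f v x * g x) →
      (∑' x, |hatP pi f v x - hatP pin f v x| * g x) ≤
        Ehat * ∑' x, hatP pi f v x * g x) :
    ∀ g : F → ℝ, (∀ x, 0 < g x ∧ g x ≤ f x) →
      (∑' x, |pi x - pin x| * g x) ≤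
        Ehat * (1 + (1 + Ehat) / max (1 - min Ehat 1) (1 / (bhat * Cbar))) *
          ∑' x, pi x * g x := by
  intro g hg
  obtain ⟨S, hS, -, hp0, hp, hpi⟩ := hatP_facts v f hv hf Cbar hCbar pi hpi0 hpi1
  obtain ⟨T, hT, hTC, hq0, hq, hpin⟩ := hatP_facts v f hv hf Cbar hCbar pin hpin0 hpin1
  obtain ⟨hpv, hpvb⟩ := hhatv
  have hdv := summable_abs_sub_mul _ _ v hv hp0 hp hq hpv Ehat hEhat hbound
  set p := hatP pi f v
  set q := hatP pin f v
  have hpg : ∀ w : F → ℝ, (∀ x, 0 < w x ∧ w x ≤ v x) → Summable (fun x => p x * w x) :=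
    fun w hw => hpv.of_nonneg_of_le (fun x => mul_nonneg (hp0 x) (hw x).1.le)
      (fun x => mul_le_mul_of_nonneg_left (hw x).2 (hp0 x))
  have hdg : ∀ w : F → ℝ, (∀ x, 0 < w x ∧ w x ≤ v x) →
      Summable (fun x => |p x - q x| * w x) :=
    fun w hw => hdv.of_nonneg_of_le (fun x => mul_nonneg (abs_nonneg _) (hw x).1.le)
      (fun x => mul_le_mul_of_nonneg_left (hw x).2 (abs_nonneg _))
  have hf0 : ∀ x, 0 < f x := fun x => by linarith [hf x]
  have hw1 : ∀ x, 0 < v x / f x ∧ v x / f x ≤ v x :=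
    fun x => ⟨div_pos (hv x) (hf0 x), div_le_self (hv x).le (hf x)⟩
  have hsumS : S * ∑' x, p x * (v x / f x) = 1 := by
    rw [← tsum_mul_left, ← hpi1]
    exact tsum_congr fun x => (hpi x).symm
  have hsumT : T * ∑' x, q x * (v x / f x) = 1 := by
    rw [← tsum_mul_left, ← hpin1]
    exact tsum_congr fun x => (hpin x).symm
  have hqs : ∀ w : F → ℝ, (∀ x, 0 < w x ∧ w x ≤ v x) → Summable (fun x => q x * w x) := by
    intro w hw
    refine ((hpg w hw).add (hdg w hw)).of_nonneg_of_le
      (fun x => mul_nonneg (hq0 x) (hw x).1.le) (fun x => ?_)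
    have := neg_abs_le (p x - q x)
    nlinarith [(hw x).1]
  set P := ∑' x, p x * (v x / f x) with hP
  set Q := ∑' x, q x * (v x / f x) with hQ
  -- Here `P = 1/S` and `Q = 1/T`.
  have hPQ : |P - Q| ≤ Ehat * P := by
    refine le_trans ?_ (hbound _ hw1 (hpg _ hw1))
    rw [hP, hQ, ← (hpg _ hw1).tsum_sub (hqs _ hw1)]
    have hn : ∀ x, ‖p x * (v x / f x) - q x * (v x / f x)‖ = |p x - q x| * (v x / f x) := by
      intro x
      rw [← sub_mul, Real.norm_eq_abs, abs_mul, abs_of_pos (hw1 x).1]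
    have := norm_tsum_le_tsum_norm
      (f := fun x => p x * (v x / f x) - q x * (v x / f x)) ((hdg _ hw1).congr fun x => (hn x).symm)
    simpa only [hn, Real.norm_eq_abs] using this
  have hPb : P ≤ bhat :=
    ((hpg _ hw1).tsum_le_tsum (fun x => mul_le_mul_of_nonneg_left (hw1 x).2 (hp0 x)) hpv).trans hpvb
  have hST : |S - T| ≤ Ehat * T := by
    have h : S - T = S * T * (Q - P) := by linear_combination T * hsumS - S * hsumT
    rw [h, abs_mul, abs_of_pos (mul_pos hS hT), abs_sub_comm]
    calc S * T * |P - Q| ≤ S * T * (Ehat * P) :=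
          mul_le_mul_of_nonneg_left hPQ (mul_pos hS hT).le
      _ = Ehat * T := by linear_combination Ehat * T * hsumS
  have hC : 0 < Cbar := hT.trans_le hTC
  have hbS : 1 ≤ bhat * S := by nlinarith
  set m := max (1 - min Ehat 1) (1 / (bhat * Cbar)) with hm
  have hm0 : 0 < m := lt_max_of_lt_right (by positivity)
  have hmT : m * T ≤ S := by
    rw [← le_div_iff₀ hT, hm]
    refine max_le ?_ ?_
    · rw [le_div_iff₀ hT]
      rcases le_total Ehat 1 with h | h
      · rw [min_eq_left h]
        linarith [neg_abs_le (S - T)]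
      · rw [min_eq_right h]
        linarith
    · rw [div_le_div_iff₀ (by positivity) hT]
      nlinarith
  -- The test function `w = g v/f` turns sums against `g` into sums against `π̂` and `π̂ₙ`.
  set w : F → ℝ := fun x => g x * (v x / f x) with hwdef
  have hw : ∀ x, 0 < w x ∧ w x ≤ v x := by
    intro x
    refine ⟨mul_pos (hg x).1 (hw1 x).1, ?_⟩
    calc g x * (v x / f x) ≤ f x * (v x / f x) :=
          mul_le_mul_of_nonneg_right (hg x).2 (hw1 x).1.le
      _ = v x := mul_div_cancel₀ _ (hf0 x).ne'
  have hG : (∑' x, pi x * g x) = S * ∑' x, p x * w x := by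
    rw [← tsum_mul_left]
    refine tsum_congr fun x => ?_
    rw [hpi x, hwdef]
    ring
  have hbd := hbound w hw (hpg w hw)
  have hpt : ∀ x, |pi x - pin x| * g x ≤
      (S + |S - T|) * (|p x - q x| * w x) + |S - T| * (p x * w x) := by
    intro x
    have h1 : |pi x - pin x| * g x = |S * p x - T * q x| * w x := by
      have : pi x - pin x = (S * p x - T * q x) * (v x / f x) := by
        rw [hpi x, hpin x]
        ring
      rw [this, abs_mul, abs_of_pos (hw1 x).1, hwdef]
      ring
    have h2 : |S * p x - T * q x| ≤ S * |p x - q x| + |S - T| * q x := by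
      have : S * p x - T * q x = S * (p x - q x) + (S - T) * q x := by ring
      rw [this]
      refine (abs_add_le _ _).trans_eq ?_
      rw [abs_mul, abs_mul, abs_of_pos hS, abs_of_nonneg (hq0 x)]
    have h3 : q x ≤ p x + |p x - q x| := by linarith [neg_abs_le (p x - q x)]
    have h4 := mul_le_mul_of_nonneg_left h3 (abs_nonneg (S - T))
    rw [h1]
    calc |S * p x - T * q x| * w x
        ≤ ((S + |S - T|) * |p x - q x| + |S - T| * p x) * w x :=
          mul_le_mul_of_nonneg_right (by linarith) (hw x).1.le
      _ = _ := by ring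
  have hs1 := (hdg w hw).mul_left (S + |S - T|)
  have hs2 := (hpg w hw).mul_left |S - T|
  have hmain : (∑' x, |pi x - pin x| * g x) ≤
      (S + |S - T|) * (∑' x, |p x - q x| * w x) + |S - T| * ∑' x, p x * w x := by
    rw [← tsum_mul_left, ← tsum_mul_left, ← hs1.tsum_add hs2]
    exact ((hs1.add hs2).of_nonneg_of_le
      (fun x => mul_nonneg (abs_nonneg _) (hg x).1.le) hpt).tsum_le_tsum hpt (hs1.add hs2)
  have hW : 0 ≤ ∑' x, p x * w x := tsum_nonneg fun x => mul_nonneg (hp0 x) (hw x).1.le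
  rw [hG]
  set W := ∑' x, p x * w x
  have hSTm : |S - T| ≤ Ehat * (S / m) :=
    hST.trans (mul_le_mul_of_nonneg_left ((le_div_iff₀ hm0).2 (by linarith)) hEhat)
  calc (∑' x, |pi x - pin x| * g x)
      ≤ (S + |S - T|) * (Ehat * W) + |S - T| * W :=
        hmain.trans (add_le_add_left
          (mul_le_mul_of_nonneg_left hbd (add_nonneg hS.le (abs_nonneg _))) _)
    _ = Ehat * S * W + |S - T| * ((1 + Ehat) * W) := by ring
    _ ≤ Ehat * S * W + Ehat * (S / m) * ((1 + Ehat) * W) := by gcongr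
    _ = Ehat * (1 + (1 + Ehat) / m) * (S * W) := by ring
end

section
/- Let F be a countable set, π and π_n probability vectors on F, v : F → (0,∞), f : F → [1,∞), and suppose C̄ := sup_{x∈F} f(x)/v(x) < ∞. Define π̂(x) := π(x)(f(x)/v(x)) / Σ_{z∈F} π(z)(f(z)/v(z)) and π̂_n(x) := π_n(x)(f(x)/v(x)) / Σ_{z∈F} π_n(z)(f(z)/v(z)). Suppose Σ_x π̂(x) v(x) ≤ b̂ for some b̂ > 0, suppose Σ_x π_n(x) f(x) ≤ b for some b > 0, and suppose Ê ≥ 0 is such that for every ĝ : F → ℝ with 0 < ĝ(x) ≤ v(x) for all x and Σ_x π̂(x) ĝ(x) < ∞, one has Σ_x |π̂(x) − π̂_n(x)| ĝ(x) ≤ Ê · Σ_x π̂(x) ĝ(x). Then for every g : F → ℝ with 1 ≤ g(x) ≤ f(x) for all x, Σ_x |π(x) − π_n(x)| g(x) ≤ Ê · [1 + min((1 + Ê)/max(1 − min(Ê,1), 1/(b̂ C̄)), b)] · Σ_x π(x) g(x). -/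
/-- The normalizing constant of `hatP` is positive and at most `C`. -/
lemma hatP_normalizer {F : Type*} {v f : F → ℝ}
    (hv : ∀ x, 0 < v x) (hf : ∀ x, 1 ≤ f x) {C : ℝ} (hC : ∀ x, f x / v x ≤ C)
    {p : F → ℝ} (hp0 : ∀ x, 0 ≤ p x) (hp : Summable p) (hp1 : (∑' x, p x) = 1) :
    0 < (∑' x, p x * (f x / v x)) ∧ (∑' x, p x * (f x / v x)) ≤ C := by
  have hw : ∀ x, 0 < f x / v x := fun x => div_pos (by linarith [hf x]) (hv x)
  have hs : Summable (fun x => p x * (f x / v x)) :=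
    Summable.of_nonneg_of_le (fun x => mul_nonneg (hp0 x) (hw x).le)
      (fun x => mul_le_mul_of_nonneg_left (hC x) (hp0 x)) (hp.mul_right C)
  constructor
  · obtain ⟨x, hx⟩ : ∃ x, p x ≠ 0 := by
      by_contra! h
      simp [h] at hp1
    exact hs.tsum_pos (fun x => mul_nonneg (hp0 x) (hw x).le) x
      (mul_pos (lt_of_le_of_ne (hp0 x) hx.symm) (hw x))
  · calc (∑' x, p x * (f x / v x)) ≤ ∑' x, p x * C :=
          hs.tsum_le_tsum (fun x => mul_le_mul_of_nonneg_left (hC x) (hp0 x)) (hp.mul_right C)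
      _ = C := by rw [tsum_mul_right, hp1, one_mul]

/-- The error bound for the transformed vectors, tested with `h v / f` and rewritten in terms of
the original vectors. -/
lemma hatP_bound_transfer {F : Type*} {v f p q : F → ℝ}
    (hv : ∀ x, 0 < v x) (hf : ∀ x, 1 ≤ f x) {E : ℝ}
    (hbound : ∀ g : F → ℝ, (∀ x, 0 < g x ∧ g x ≤ v x) →
      Summable (fun x => hatP p f v x * g x) →
      (∑' x, |hatP p f v x - hatP q f v x| * g x) ≤ E * ∑' x, hatP p f v x * g x)
    {h : F → ℝ} (hh : ∀ x, 0 < h x ∧ h x ≤ f x) (hs : Summable (fun x => p x * h x)) :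
    (∑' x, |p x / (∑' z, p z * (f z / v z)) - q x / (∑' z, q z * (f z / v z))| * h x) ≤
      E * ((∑' x, p x * h x) / ∑' z, p z * (f z / v z)) := by
  have hfp : ∀ x, 0 < f x := fun x => by linarith [hf x]
  have key := hbound (fun x => h x * v x / f x)
  have e1 : ∀ x, hatP p f v x * (h x * v x / f x) = p x * h x / ∑' z, p z * (f z / v z) := by
    intro x
    have := (hfp x).ne'
    have := (hv x).ne'
    unfold hatP
    generalize (∑' z, p z * (f z / v z)) = S
    rw [div_mul_eq_mul_div]
    congr 1
    field_simp
  have e2 : ∀ x, |hatP p f v x - hatP q f v x| * (h x * v x / f x) =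
      |p x / (∑' z, p z * (f z / v z)) - q x / (∑' z, q z * (f z / v z))| * h x := by
    intro x
    have h1 := hfp x
    have h2 := hv x
    unfold hatP
    generalize (∑' z, p z * (f z / v z)) = S
    generalize (∑' z, q z * (f z / v z)) = T
    have : p x * (f x / v x) / S - q x * (f x / v x) / T =
        (p x / S - q x / T) * (f x / v x) := by ring
    rw [this, abs_mul, abs_of_pos (div_pos h1 h2)]
    field_simp
  simp only [e1, e2, tsum_div_const] at key
  refine key (fun x => ⟨div_pos (mul_pos (hh x).1 (hv x)) (hfp x), ?_⟩) (hs.div_const _)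
  rw [div_le_iff₀ (hfp x), mul_comm]
  exact mul_le_mul_of_nonneg_left (hh x).2 (hv x).le

/-- Bound (3.11) of the paper's Theorem 3.1, in per-function form over functions
`g` with `e ≤ g ≤ f`. -/
theorem stmt13 {F : Type*} [Countable F] (v f : F → ℝ)
    (hv : ∀ x, 0 < v x) (hf : ∀ x, 1 ≤ f x)
    (Cbar : ℝ) (hCbar : ∀ x, f x / v x ≤ Cbar)
    (pi pin : F → ℝ)
    (hpi0 : ∀ x, 0 ≤ pi x) (hpi1 : (∑' x, pi x) = 1)
    (hpin0 : ∀ x, 0 ≤ pin x) (hpin1 : (∑' x, pin x) = 1)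
    (bhat : ℝ) (hbhat : 0 < bhat)
    (hhatv : Summable (fun x => hatP pi f v x * v x) ∧
      (∑' x, hatP pi f v x * v x) ≤ bhat)
    (b : ℝ) (hb : 0 < b)
    (hpinf : Summable (fun x => pin x * f x) ∧ (∑' x, pin x * f x) ≤ b)
    (Ehat : ℝ) (hEhat : 0 ≤ Ehat)
    (hbound : ∀ g : F → ℝ, (∀ x, 0 < g x ∧ g x ≤ v x) →
      Summable (fun x => hatP pi f v x * g x) →
      (∑' x, |hatP pi f v x - hatP pin f v x| * g x) ≤
        Ehat * ∑' x, hatP pi f v x * g x) :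
    ∀ g : F → ℝ, (∀ x, 1 ≤ g x ∧ g x ≤ f x) →
      (∑' x, |pi x - pin x| * g x) ≤
        Ehat * (1 + min ((1 + Ehat) / max (1 - min Ehat 1) (1 / (bhat * Cbar))) b) *
          ∑' x, pi x * g x := by
  intro g hg
  have hpis : Summable pi := by
    by_contra h
    simp [tsum_eq_zero_of_not_summable h] at hpi1
  have hpins : Summable pin := by
    by_contra h
    simp [tsum_eq_zero_of_not_summable h] at hpin1
  obtain ⟨hS, -⟩ := hatP_normalizer hv hf hCbar hpi0 hpis hpi1
  obtain ⟨hT, hTC⟩ := hatP_normalizer hv hf hCbar hpin0 hpins hpin1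
  have transfer := fun h => hatP_bound_transfer (h := h) hv hf hbound
  have ev : ∀ x, hatP pi f v x * v x = pi x * f x / ∑' z, pi z * (f z / v z) := by
    intro x
    have := (hv x).ne'
    unfold hatP
    generalize (∑' z, pi z * (f z / v z)) = S
    rw [div_mul_eq_mul_div]
    congr 1
    field_simp
  simp only [ev, tsum_div_const] at hhatv
  clear hbound ev
  generalize (∑' z, pi z * (f z / v z)) = S at *
  generalize (∑' z, pin z * (f z / v z)) = T at *
  obtain ⟨hfs, hfb⟩ := hhatv
  have hpif : Summable (fun x => pi x * f x) := by
    have := hfs.mul_right S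
    simpa [div_mul_cancel₀ _ hS.ne'] using this
  have hg0 : ∀ x, 0 ≤ g x := fun x => by linarith [(hg x).1]
  have hpig : Summable (fun x => pi x * g x) :=
    Summable.of_nonneg_of_le (fun x => mul_nonneg (hpi0 x) (hg0 x))
      (fun x => mul_le_mul_of_nonneg_left (hg x).2 (hpi0 x)) hpif
  have hping : Summable (fun x => pin x * g x) :=
    Summable.of_nonneg_of_le (fun x => mul_nonneg (hpin0 x) (hg0 x))
      (fun x => mul_le_mul_of_nonneg_left (hg x).2 (hpin0 x)) hpinf.1
  have hG1 : 1 ≤ ∑' x, pi x * g x := by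
    rw [← hpi1]
    exact hpis.tsum_le_tsum (fun x => le_mul_of_one_le_right (hpi0 x) (hg x).1) hpig
  have hF1 : 1 ≤ ∑' x, pi x * f x := by
    rw [← hpi1]
    exact hpis.tsum_le_tsum (fun x => le_mul_of_one_le_right (hpi0 x) (hf x)) hpif
  have hGb : (∑' x, pin x * g x) ≤ b :=
    (hping.tsum_le_tsum (fun x => mul_le_mul_of_nonneg_left (hg x).2 (hpin0 x)) hpinf.1).trans
      hpinf.2
  -- `h = 1`: comparison of the two normalizing constants
  have h1 : |1 / S - 1 / T| ≤ Ehat * (1 / S) := by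
    have t := transfer (fun _ => 1) (fun x => ⟨one_pos, hf x⟩) (by simpa using hpis)
    simp only [mul_one, hpi1] at t
    have hs := (hpis.div_const S).sub (hpins.div_const T)
    have e : (∑' x, (pi x / S - pin x / T)) = 1 / S - 1 / T := by
      rw [(hpis.div_const S).tsum_sub (hpins.div_const T), tsum_div_const, tsum_div_const,
        hpi1, hpin1]
    rw [← e]
    refine le_trans ?_ t
    simpa only [Real.norm_eq_abs] using norm_tsum_le_tsum_norm hs.norm
  have hST : |S - T| ≤ Ehat * T := by
    have e : S - T = (1 / S - 1 / T) * (-(S * T)) := by field_simp; ring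
    rw [e, abs_mul, abs_neg, abs_of_pos (mul_pos hS hT)]
    calc _ ≤ Ehat * (1 / S) * (S * T) := mul_le_mul_of_nonneg_right h1 (mul_pos hS hT).le
      _ = Ehat * T := by field_simp
  have h2 := transfer g (fun x => ⟨by linarith [(hg x).1], (hg x).2⟩) hpig
  have hsub : Summable (fun x => |pi x / S - pin x / T| * g x) := by
    have := ((hpig.div_const S).sub (hping.div_const T)).norm
    refine this.congr fun x => ?_
    rw [Real.norm_eq_abs, ← abs_of_nonneg (hg0 x), ← abs_mul, abs_of_nonneg (hg0 x)]
    congr 1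
    ring
  have hmain : (∑' x, |pi x - pin x| * g x) ≤
      Ehat * (∑' x, pi x * g x) + Ehat * ∑' x, pin x * g x := by
    have hpt : ∀ x, |pi x - pin x| * g x ≤
        S * (|pi x / S - pin x / T| * g x) + Ehat * (pin x * g x) := by
      intro x
      have e : pi x - pin x = S * (pi x / S - pin x / T) + (S - T) / T * pin x := by
        field_simp; ring
      have a1 : |(S - T) / T * pin x| ≤ Ehat * pin x := by
        rw [abs_mul, abs_div, abs_of_pos hT, abs_of_nonneg (hpin0 x)]
        exact mul_le_mul_of_nonneg_right ((div_le_iff₀ hT).2 hST) (hpin0 x)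
      have a2 : |pi x - pin x| ≤ S * |pi x / S - pin x / T| + Ehat * pin x := by
        rw [e]
        refine (abs_add_le _ _).trans (add_le_add ?_ a1)
        rw [abs_mul, abs_of_pos hS]
      nlinarith [mul_le_mul_of_nonneg_right a2 (hg0 x)]
    have hr := (hsub.mul_left S).add (hping.mul_left Ehat)
    have hl := Summable.of_nonneg_of_le
      (fun x => mul_nonneg (abs_nonneg (pi x - pin x)) (hg0 x)) hpt hr
    refine (hl.tsum_le_tsum hpt hr).trans ?_
    rw [(hsub.mul_left S).tsum_add (hping.mul_left Ehat), tsum_mul_left, tsum_mul_left]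
    refine add_le_add ?_ le_rfl
    calc _ ≤ S * _ := mul_le_mul_of_nonneg_left h2 hS.le
      _ = _ := by field_simp
  have hGn : (∑' x, pin x * g x) / T ≤ (1 + Ehat) * ((∑' x, pi x * g x) / S) := by
    have hpt : ∀ x, pin x * g x / T ≤ pi x * g x / S + |pi x / S - pin x / T| * g x := by
      intro x
      have := mul_le_mul_of_nonneg_right (neg_abs_le (pi x / S - pin x / T)) (hg0 x)
      have e : (pi x / S - pin x / T) * g x = pi x * g x / S - pin x * g x / T := by ring
      linarith
    have t := (hping.div_const T).tsum_le_tsum hpt ((hpig.div_const S).add hsub)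
    rw [(hpig.div_const S).tsum_add hsub, tsum_div_const, tsum_div_const] at t
    linarith
  generalize (∑' x, pi x * g x) = G at *
  generalize (∑' x, pin x * g x) = Gn at *
  have hCpos : 0 < Cbar := hT.trans_le hTC
  have hratio : max (1 - min Ehat 1) (1 / (bhat * Cbar)) ≤ S / T := by
    rw [le_div_iff₀ hT]
    have hSb : 1 ≤ bhat * S := hF1.trans ((div_le_iff₀ hS).1 hfb)
    rcases max_choice (1 - min Ehat 1) (1 / (bhat * Cbar)) with h | h <;> rw [h]
    · rcases min_choice Ehat 1 with h' | h' <;> rw [h']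
      · linarith [neg_abs_le (S - T)]
      · linarith
    · rw [div_mul_eq_mul_div, div_le_iff₀ (mul_pos hbhat hCpos)]
      nlinarith
  have hmpos : 0 < max (1 - min Ehat 1) (1 / (bhat * Cbar)) :=
    lt_max_of_lt_right (one_div_pos.2 (mul_pos hbhat hCpos))
  have hfin : Gn ≤ min ((1 + Ehat) / max (1 - min Ehat 1) (1 / (bhat * Cbar))) b * G := by
    generalize max (1 - min Ehat 1) (1 / (bhat * Cbar)) = m at *
    rcases min_choice ((1 + Ehat) / m) b with h | h <;> rw [h]
    · calc Gn = Gn / T * T := by field_simp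
        _ ≤ (1 + Ehat) * (G / S) * T := mul_le_mul_of_nonneg_right hGn hT.le
        _ = (1 + Ehat) * G / (S / T) := by field_simp
        _ ≤ (1 + Ehat) * G / m :=
            div_le_div_of_nonneg_left (mul_nonneg (by linarith) (by linarith)) hmpos hratio
        _ = (1 + Ehat) / m * G := by ring
    · nlinarith
  nlinarith [mul_le_mul_of_nonneg_left hfin hEhat]
end

section
/- Let F be a countable set, v : F → (0,∞), f : F → [1,∞), and suppose C̄ := sup_{x∈F} f(x)/v(x) < ∞. Let π and π* be probability vectors on F, and define π̂(x) := π(x)(f(x)/v(x)) / Σ_{z∈F} π(z)(f(z)/v(z)) and π̂*(x) := π*(x)(f(x)/v(x)) / Σ_{z∈F} π*(z)(f(z)/v(z)). If Σ_x π̂(x) v(x) ≤ b̂ for some b̂ > 0, then Σ_{x∈F} |π*(x) − π(x)| f(x) ≤ C̄ (1 + b̂ C̄) Σ_{x∈F} |π̂*(x) − π̂(x)| v(x), the inequality being understood in [0,∞]. -/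
/-!
Write `S = ∑ π f/v` and `S* = ∑ π* f/v` for the normalizing constants, both in `(0, C̄]`, and
`D = ∑ |π̂* - π̂| v`. Since `π f = S π̂ v` and `π* f = S* π̂* v`, the triangle inequality gives
`|π* - π| f ≤ S* |π̂* - π̂| v + |S* - S| π̂ v`, whose sum is at most `C̄ D + |S* - S| b̂`.
Moreover `π / S = π̂ v / f` sums to `1 / S`, so `f ≥ 1` yields `|1/S* - 1/S| ≤ D`, that is,
`|S* - S| ≤ S S* D ≤ C̄² D` (`abs_normalizer_sub_le`). If `D = ∞`, the right-hand side is infinite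
because the constant `C̄ (1 + b̂ C̄)` is positive.
-/

open scoped ENNReal

lemma summable_of_tsum_eq_one {F : Type*} {p : F → ℝ} (h : (∑' x, p x) = 1) : Summable p := by
  by_contra hn
  rw [tsum_eq_zero_of_not_summable hn] at h
  exact zero_ne_one h

/-- The normalizing constant of a probability vector lies in `(0, C]`. -/
lemma normalizer_mem {F : Type*} {p r : F → ℝ} {C : ℝ} (hr : ∀ x, 0 < r x) (hC : ∀ x, r x ≤ C)
    (hp0 : ∀ x, 0 ≤ p x) (hp1 : (∑' x, p x) = 1) :
    0 < (∑' x, p x * r x) ∧ (∑' x, p x * r x) ≤ C := by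
  have hs := summable_of_tsum_eq_one hp1
  have hle : ∀ x, p x * r x ≤ p x * C := fun x => mul_le_mul_of_nonneg_left (hC x) (hp0 x)
  have h0 : ∀ x, 0 ≤ p x * r x := fun x => mul_nonneg (hp0 x) (hr x).le
  have hs' : Summable (fun x => p x * r x) := Summable.of_nonneg_of_le h0 hle (hs.mul_right C)
  constructor
  · obtain ⟨x, hx⟩ : ∃ x, p x ≠ 0 := by
      by_contra! hn
      simp [hn] at hp1
    exact hs'.tsum_pos h0 x (mul_pos (lt_of_le_of_ne (hp0 x) hx.symm) (hr x))
  · have := hs'.tsum_le_tsum hle (hs.mul_right C)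
    rwa [tsum_mul_right, hp1, one_mul] at this

/-- Probability vectors `p`, `q` divided by `S`, `T` have masses `1 / S`, `1 / T`, so a pointwise
bound on the difference of the quotients controls `T - S`. -/
lemma abs_normalizer_sub_le {F : Type*} {p q g : F → ℝ} {S T C : ℝ}
    (hp1 : (∑' x, p x) = 1) (hq1 : (∑' x, q x) = 1)
    (hS : 0 < S) (hT : 0 < T) (hSC : S ≤ C) (hTC : T ≤ C)
    (hg : Summable g) (hle : ∀ x, |q x / T - p x / S| ≤ g x) :
    |T - S| ≤ C ^ 2 * ∑' x, g x := by
  have hp := (summable_of_tsum_eq_one hp1).div_const S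
  have hq := (summable_of_tsum_eq_one hq1).div_const T
  have h1 : (∑' x, (q x / T - p x / S)) = 1 / T - 1 / S := by
    rw [hq.tsum_sub hp, tsum_div_const, tsum_div_const, hp1, hq1]
  have h2 : |1 / T - 1 / S| ≤ ∑' x, g x := by
    rw [← h1]
    exact tsum_of_norm_bounded (f := fun x => q x / T - p x / S) hg.hasSum hle
  have h3 : |T - S| = S * T * |1 / T - 1 / S| := by
    rw [← abs_of_pos (mul_pos hS hT), ← abs_mul, abs_sub_comm]
    congr 1
    field_simp
  rw [h3, sq]
  have hC : 0 < C := hS.trans_le hSC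
  gcongr

/-- The key inequality `‖π* − π‖_f ≤ C̄ (1 + b̂ C̄) ‖π̂* − π̂‖_v` from the proof of the
paper's Theorem 5.2, understood in `[0,∞]`. -/
theorem stmt18 {F : Type*} [Countable F] (v f : F → ℝ)
    (hv : ∀ x, 0 < v x) (hf : ∀ x, 1 ≤ f x)
    (Cbar : ℝ) (hCbar : ∀ x, f x / v x ≤ Cbar)
    (pi pis : F → ℝ)
    (hpi0 : ∀ x, 0 ≤ pi x) (hpi1 : (∑' x, pi x) = 1)
    (hpis0 : ∀ x, 0 ≤ pis x) (hpis1 : (∑' x, pis x) = 1)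
    (bhat : ℝ) (hbhat : 0 < bhat)
    (hhatv : Summable (fun x => hatP pi f v x * v x) ∧
      (∑' x, hatP pi f v x * v x) ≤ bhat) :
    (∑' x, ENNReal.ofReal (|pis x - pi x| * f x)) ≤
      ENNReal.ofReal (Cbar * (1 + bhat * Cbar)) *
        ∑' x, ENNReal.ofReal (|hatP pis f v x - hatP pi f v x| * v x) := by
  have hr : ∀ x, 0 < f x / v x := fun x => div_pos (one_pos.trans_le (hf x)) (hv x)
  obtain ⟨hS, hSC⟩ := normalizer_mem hr hCbar hpi0 hpi1
  obtain ⟨hT, hTC⟩ := normalizer_mem hr hCbar hpis0 hpis1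
  have hC : 0 < Cbar := hS.trans_le hSC
  have hK : 0 < Cbar * (1 + bhat * Cbar) := by positivity
  have hg0 : ∀ x, 0 ≤ |hatP pis f v x - hatP pi f v x| * v x :=
    fun x => mul_nonneg (abs_nonneg _) (hv x).le
  by_cases hg : Summable (fun x => |hatP pis f v x - hatP pi f v x| * v x)
  swap
  · have htop : (∑' x, ENNReal.ofReal (|hatP pis f v x - hatP pi f v x| * v x)) = ⊤ := by
      by_contra hn
      apply hg
      have := ENNReal.summable_toReal hn
      simpa only [ENNReal.toReal_ofReal (hg0 _)] using this
    rw [htop, ENNReal.mul_top (by simpa using hK)]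
    exact le_top
  obtain ⟨hs, hb⟩ := hhatv
  set S := ∑' z, pi z * (f z / v z) with hSdef
  set T := ∑' z, pis z * (f z / v z) with hTdef
  have hpiv : ∀ x, hatP pi f v x * v x = pi x / S * f x := by
    intro x
    have := (hv x).ne'
    rw [hatP, ← hSdef]
    field_simp
  have hpisv : ∀ x, hatP pis f v x * v x = pis x / T * f x := by
    intro x
    have := (hv x).ne'
    rw [hatP, ← hTdef]
    field_simp
  have hgeq : ∀ x, |hatP pis f v x - hatP pi f v x| * v x = |pis x / T - pi x / S| * f x := by
    intro x
    rw [← abs_of_pos (hv x), ← abs_mul, sub_mul, hpiv, hpisv, ← sub_mul,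
      abs_mul, abs_of_pos (one_pos.trans_le (hf x))]
  have hTS := abs_normalizer_sub_le hpi1 hpis1 hS hT hSC hTC hg (fun x => by
    rw [hgeq]
    exact le_mul_of_one_le_right (abs_nonneg _) (hf x))
  have hpt : ∀ x, |pis x - pi x| * f x ≤
      T * (|hatP pis f v x - hatP pi f v x| * v x) + |T - S| * (hatP pi f v x * v x) := by
    intro x
    have hsplit : pis x - pi x = T * (pis x / T - pi x / S) + (T - S) * (pi x / S) := by
      field_simp
      ring
    have habs : |pis x - pi x| ≤ T * |pis x / T - pi x / S| + |T - S| * (pi x / S) := by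
      rw [hsplit]
      refine (abs_add_le _ _).trans_eq ?_
      rw [abs_mul, abs_mul, abs_of_pos hT, abs_of_nonneg (div_nonneg (hpi0 x) hS.le)]
    rw [hgeq, hpiv]
    calc _ ≤ (T * |pis x / T - pi x / S| + |T - S| * (pi x / S)) * f x :=
          mul_le_mul_of_nonneg_right habs (zero_le_one.trans (hf x))
      _ = _ := by ring
  have hsum := (hg.mul_left T).add (hs.mul_left |T - S|)
  rw [← ENNReal.ofReal_tsum_of_nonneg hg0 hg, ← ENNReal.ofReal_mul hK.le]
  refine (ENNReal.tsum_le_tsum fun x => ENNReal.ofReal_le_ofReal (hpt x)).trans ?_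
  rw [← ENNReal.ofReal_tsum_of_nonneg (fun x => (mul_nonneg (abs_nonneg _)
    (zero_le_one.trans (hf x))).trans (hpt x)) hsum]
  apply ENNReal.ofReal_le_ofReal
  rw [(hg.mul_left T).tsum_add (hs.mul_left |T - S|), tsum_mul_left, tsum_mul_left]
  have hD : 0 ≤ ∑' x, |hatP pis f v x - hatP pi f v x| * v x := tsum_nonneg hg0
  calc _ ≤ Cbar * (∑' x, |hatP pis f v x - hatP pi f v x| * v x) +
        (Cbar ^ 2 * ∑' x, |hatP pis f v x - hatP pi f v x| * v x) * bhat :=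
        add_le_add (mul_le_mul_of_nonneg_right hTC hD)
          ((mul_le_mul_of_nonneg_left hb (abs_nonneg _)).trans
            (mul_le_mul_of_nonneg_right hTS hbhat.le))
    _ = _ := by ring
end
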